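/- Let Γ be a poly-line drawing of a finite simple planar graph G. Then there exists a flat orthogonal drawing Γ' of G with the same y-coordinates as Γ and the same left-to-right order in each row; moreover, if Γ is y-monotone then Γ' is y-monotone. In particular, Γ' has the same height as Γ. -/

import Mathlib

open Set

/-- A point in the plane. -/
abbrev Pt : Type := ℝ × ℝ

/-- A point has integer coordinates. -/
def IsIntPt (p : Pt) : Prop := (∃ a : ℤ, p.1 = (a : ℝ)) ∧ (∃ b : ℤ, p.2 = (b : ℝ))

/-- The (closed) segments of a polygonal chain, as pairs of consecutive corners. -/
def chainSegs (l : List Pt) : List (Pt × Pt) := l.zip l.tail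

/-- The set of points covered by a polygonal chain. -/
def chainSet (l : List Pt) : Set Pt := ⋃ s ∈ chainSegs l, segment ℝ s.1 s.2

/-- A polygonal chain is simple (non-self-intersecting): it has at least two
corners, all corners are distinct, and two of its segments meet only if they are
consecutive, and then only in their shared corner. -/
def IsSimpleChain (l : List Pt) : Prop :=
  2 ≤ l.length ∧ l.Nodup ∧
    ∀ i j : ℕ, i < j → ∀ (hi : i < (chainSegs l).length) (hj : j < (chainSegs l).length),
      segment ℝ ((chainSegs l).get ⟨i, hi⟩).1 ((chainSegs l).get ⟨i, hi⟩).2 ∩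
        segment ℝ ((chainSegs l).get ⟨j, hj⟩).1 ((chainSegs l).get ⟨j, hj⟩).2 ⊆
        if j = i + 1 then {((chainSegs l).get ⟨j, hj⟩).1} else (∅ : Set Pt)

/-- Every interior corner of the chain is a genuine bend (a direction change). -/
def GenuineBends (l : List Pt) : Prop :=
  ∀ i : ℕ, ∀ h : i + 2 < l.length,
    ¬ Collinear ℝ ({l.get ⟨i, by omega⟩, l.get ⟨i + 1, by omega⟩, l.get ⟨i + 2, h⟩} : Set Pt)

/-- The chain is a y-monotone path (horizontal segments allowed). -/
def IsMonoChain (l : List Pt) : Prop :=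
  (l.map Prod.snd).Chain' (· ≤ ·) ∨ (l.map Prod.snd).Chain' (fun a b => b ≤ a)

/-- All segments of the chain are horizontal or vertical. -/
def IsOrthoChain (l : List Pt) : Prop :=
  ∀ s ∈ chainSegs l, s.1.1 = s.2.1 ∨ s.1.2 = s.2.2

/-- A poly-line drawing of a graph `G`: every vertex is a point, and every edge
`uv` is the polygonal chain through the list `bends u v` of bend points
(listed in order from `u` to `v`). -/
structure PolylineDrawing {V : Type*} (G : SimpleGraph V) where
  pos : V → Pt
  bends : V → V → List Pt
  bends_symm : ∀ u v, bends v u = (bends u v).reverse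

namespace PolylineDrawing

variable {V : Type*} {G : SimpleGraph V}

/-- The corner list of the curve of edge `uv`. -/
def chain (D : PolylineDrawing G) (u v : V) : List Pt :=
  D.pos u :: (D.bends u v ++ [D.pos v])

/-- The set of points of the curve of edge `uv`. -/
def curve (D : PolylineDrawing G) (u v : V) : Set Pt := chainSet (D.chain u v)

/-- The defining elements of the drawing: vertex points and bends. -/
def points (D : PolylineDrawing G) : Set Pt :=
  Set.range D.pos ∪ ⋃ (u) (v) (_ : G.Adj u v), {p | p ∈ D.bends u v}

/-- The drawing is planar: vertex points are pairwise distinct, every edge curve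
is a simple chain whose interior corners are genuine bends, an edge curve contains
no vertex point other than its endpoints, and two distinct edge curves intersect
only in points of common endpoints. -/
def IsPlanar (D : PolylineDrawing G) : Prop :=
  Function.Injective D.pos ∧
  (∀ u v, G.Adj u v → IsSimpleChain (D.chain u v) ∧ GenuineBends (D.chain u v)) ∧
  (∀ u v w, G.Adj u v → w ≠ u → w ≠ v → D.pos w ∉ D.curve u v) ∧
  (∀ u v x y, G.Adj u v → G.Adj x y → s(u, v) ≠ s(x, y) →
    D.curve u v ∩ D.curve x y ⊆ D.pos '' (({u, v} : Set V) ∩ ({x, y} : Set V)))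

/-- All defining elements have integer coordinates. -/
def IntCoords (D : PolylineDrawing G) : Prop := ∀ p ∈ D.points, IsIntPt p

/-- A straight-line drawing: no edge has bends. -/
def IsStraightLine (D : PolylineDrawing G) : Prop := ∀ u v : V, D.bends u v = []

/-- Every edge curve is a y-monotone path. -/
def IsYMonotone (D : PolylineDrawing G) : Prop :=
  ∀ u v, G.Adj u v → IsMonoChain (D.chain u v)

/-- The drawing fits (after translation) in the rows `1, …, h`. -/
def InHeight (D : PolylineDrawing G) (h : ℕ) : Prop :=
  ∃ y0 : ℤ, ∀ p ∈ D.points, (y0 : ℝ) ≤ p.2 ∧ p.2 ≤ (y0 : ℝ) + (h : ℝ) - 1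

/-- The drawing fits (after translation) in the columns `1, …, w`. -/
def InWidth (D : PolylineDrawing G) (w : ℕ) : Prop :=
  ∃ x0 : ℤ, ∀ p ∈ D.points, (x0 : ℝ) ≤ p.1 ∧ p.1 ≤ (x0 : ℝ) + (w : ℝ) - 1

end PolylineDrawing

/-- An axis-parallel box (possibly degenerated to a segment or a point). -/
structure Box where
  x1 : ℝ
  x2 : ℝ
  y1 : ℝ
  y2 : ℝ
  hx : x1 ≤ x2
  hy : y1 ≤ y2

/-- The set of points of a box. -/
def Box.pts (b : Box) : Set Pt := Set.Icc b.x1 b.x2 ×ˢ Set.Icc b.y1 b.y2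

/-- An orthogonal drawing of a graph `G`: every vertex is an axis-aligned box, and
every edge `uv` is an axis-parallel polygonal chain `chain u v` (its first corner is
the attachment point on the box of `u`, its last corner the attachment point on the
box of `v`). -/
structure OrthDrawing {V : Type*} (G : SimpleGraph V) where
  box : V → Box
  chain : V → V → List Pt
  chain_symm : ∀ u v, chain v u = (chain u v).reverse

namespace OrthDrawing

variable {V : Type*} {G : SimpleGraph V}

/-- The set of points of the curve of edge `uv`. -/
def curve (D : OrthDrawing G) (u v : V) : Set Pt := chainSet (D.chain u v)

/-- The defining elements of the drawing: corners of vertex boxes, and corners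
(attachment points and bends) of edge chains. -/
def points (D : OrthDrawing G) : Set Pt :=
  (⋃ v, ({((D.box v).x1, (D.box v).y1), ((D.box v).x1, (D.box v).y2),
          ((D.box v).x2, (D.box v).y1), ((D.box v).x2, (D.box v).y2)} : Set Pt)) ∪
    ⋃ (u) (v) (_ : G.Adj u v), {p | p ∈ D.chain u v}

/-- All points covered by the drawing (boxes and edge curves). -/
def region (D : OrthDrawing G) : Set Pt :=
  (⋃ v, (D.box v).pts) ∪ ⋃ (u) (v) (_ : G.Adj u v), D.curve u v

/-- The drawing is planar: vertex boxes are pairwise disjoint; every edge curve is a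
simple axis-parallel chain, with genuine bends, joining the boxes of its endpoints;
an edge curve meets a vertex box only in its attachment points; and two distinct
edge curves intersect only in common endpoints. -/
def IsPlanar (D : OrthDrawing G) : Prop :=
  (∀ u v : V, u ≠ v → Disjoint (D.box u).pts (D.box v).pts) ∧
  (∀ u v, G.Adj u v → IsSimpleChain (D.chain u v) ∧ IsOrthoChain (D.chain u v) ∧
      GenuineBends (D.chain u v)) ∧
  (∀ u v, G.Adj u v → ∃ p q l, D.chain u v = p :: (l ++ [q]) ∧
      p ∈ (D.box u).pts ∧ q ∈ (D.box v).pts) ∧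
  (∀ u v w, G.Adj u v → D.curve u v ∩ (D.box w).pts ⊆
      {p | (w = u ∧ (D.chain u v).head? = some p) ∨
           (w = v ∧ (D.chain u v).getLast? = some p)}) ∧
  (∀ u v x y, G.Adj u v → G.Adj x y → s(u, v) ≠ s(x, y) →
      D.curve u v ∩ D.curve x y ⊆
        {p | ((D.chain u v).head? = some p ∨ (D.chain u v).getLast? = some p) ∧
             ((D.chain x y).head? = some p ∨ (D.chain x y).getLast? = some p)})

/-- A flat drawing: every vertex box is degenerated to a horizontal segment. -/
def IsFlat (D : OrthDrawing G) : Prop := ∀ v, (D.box v).y1 = (D.box v).y2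

/-- A visibility representation: an orthogonal drawing without bends, i.e. every
edge is a single horizontal or vertical segment. -/
def IsVR (D : OrthDrawing G) : Prop := ∀ u v, G.Adj u v → (D.chain u v).length = 2

/-- Every edge curve is a y-monotone path. -/
def IsYMonotone (D : OrthDrawing G) : Prop := ∀ u v, G.Adj u v → IsMonoChain (D.chain u v)

/-- All defining elements have integer coordinates. -/
def IntCoords (D : OrthDrawing G) : Prop := ∀ p ∈ D.points, IsIntPt p

/-- The drawing fits (after translation) in the rows `1, …, h`. -/
def InHeight (D : OrthDrawing G) (h : ℕ) : Prop :=
  ∃ y0 : ℤ, ∀ p ∈ D.points, (y0 : ℝ) ≤ p.2 ∧ p.2 ≤ (y0 : ℝ) + (h : ℝ) - 1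

/-- The drawing fits (after translation) in the columns `1, …, w`. -/
def InWidth (D : OrthDrawing G) (w : ℕ) : Prop :=
  ∃ x0 : ℤ, ∀ p ∈ D.points, (x0 : ℝ) ≤ p.1 ∧ p.1 ≤ (x0 : ℝ) + (w : ℝ) - 1

end OrthDrawing

/-!
Cut every segment of the drawing at the rows. The pieces between two consecutive rows do not cross,
so the pieces and the vertices and bends can be sorted from left to right and given integer columns,
layer by layer from the bottom up, such that the columns reflect the order on every row. Each piece
becomes a vertical segment in its column, the pieces of one edge segment are joined along the rows
to a staircase, and each vertex or bend becomes a horizontal box spanning its columns. The regions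
swept by different segments meet only in the box of a common end. Hence the staircases along an edge
curve can be joined inside the boxes of its bends, which keeps the drawing planar and `y`-monotone.
-/

/-! ### Polygonal chains -/

section Chains

variable {E : Type*} [AddCommGroup E] [Module ℝ E]

/-- The points on a polygonal chain. In contrast to `chainSet`, a chain with a single corner
covers that corner, so that chains can be glued at a common corner. -/
def chainTrace : List E → Set E
  | [] => ∅
  | [a] => {a}
  | a :: b :: l => segment ℝ a b ∪ chainTrace (b :: l)

/-- Simplicity of a polygonal chain in recursive form. In contrast to `IsSimpleChain`, a chain
with fewer than two corners is simple. -/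
def IsSimplePath : List E → Prop
  | [] => True
  | [_] => True
  | a :: b :: l => a ≠ b ∧ segment ℝ a b ∩ chainTrace (b :: l) ⊆ {b} ∧ IsSimplePath (b :: l)

theorem mem_chainTrace_of_mem {l : List E} {a : E} (h : a ∈ l) : a ∈ chainTrace l := by
  induction l using chainTrace.induct with
  | case1 => simp at h
  | case2 b => simpa [chainTrace] using h
  | case3 b c l ih =>
    rcases List.mem_cons.1 h with rfl | h
    · exact .inl (left_mem_segment ℝ a c)
    · exact .inr (ih h)

theorem head_mem_chainTrace (a : E) (l : List E) : a ∈ chainTrace (a :: l) :=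
  mem_chainTrace_of_mem List.mem_cons_self

theorem chainTrace_subset_of_convex {K : Set E} (hK : Convex ℝ K) {l : List E}
    (hl : ∀ x ∈ l, x ∈ K) : chainTrace l ⊆ K := by
  match l with
  | [] => simp [chainTrace]
  | [a] => simpa [chainTrace] using hl
  | a :: b :: l =>
    exact union_subset (hK.segment_subset (hl a (by simp)) (hl b (by simp)))
      (chainTrace_subset_of_convex hK fun x hx => hl x (List.mem_cons_of_mem a hx))

theorem chainTrace_append_cons (l₁ : List E) (a : E) (l₂ : List E) :
    chainTrace (l₁ ++ a :: l₂) = chainTrace (l₁ ++ [a]) ∪ chainTrace (a :: l₂) := by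
  have ha := head_mem_chainTrace a l₂
  induction l₁ using chainTrace.induct with
  | case1 => simp [chainTrace, ha]
  | case2 b => simp [chainTrace, insert_union, ha]
  | case3 b c l ih =>
    simp only [List.cons_append, chainTrace] at ih ⊢
    rw [ih, union_assoc]

theorem chainTrace_reverse (l : List E) : chainTrace l.reverse = chainTrace l := by
  induction l using chainTrace.induct with
  | case1 => rfl
  | case2 a => rfl
  | case3 a b l ih =>
    rw [List.reverse_cons] at ih
    rw [List.reverse_cons, List.reverse_cons, List.append_assoc, List.singleton_append,
      chainTrace_append_cons, ih]
    simp [chainTrace, segment_symm ℝ b a, left_mem_segment, union_comm]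

theorem isSimplePath_append_cons {l₁ : List E} {a : E} {l₂ : List E} :
    IsSimplePath (l₁ ++ a :: l₂) ↔ IsSimplePath (l₁ ++ [a]) ∧ IsSimplePath (a :: l₂) ∧
      chainTrace (l₁ ++ [a]) ∩ chainTrace (a :: l₂) ⊆ {a} := by
  have ha := head_mem_chainTrace a l₂
  induction l₁ using chainTrace.induct with
  | case1 => simp [IsSimplePath, chainTrace]
  | case2 b =>
    simp only [List.cons_append, List.nil_append, IsSimplePath, chainTrace,
      union_inter_distrib_right, union_subset_iff, inter_subset_right, inter_subset_left]
    tauto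
  | case3 b c l ih =>
    have hc : c ∈ chainTrace (c :: (l ++ [a])) := head_mem_chainTrace c _
    have ha' : a ∈ chainTrace (c :: (l ++ [a])) := mem_chainTrace_of_mem (by simp)
    have ht := chainTrace_append_cons (c :: l) a l₂
    simp only [List.cons_append, IsSimplePath, chainTrace] at ih ht ⊢
    simp only [ih, ht, inter_union_distrib_left, union_inter_distrib_right, union_subset_iff]
    constructor
    · rintro ⟨hbc, ⟨h₁, h₂⟩, h₃, h₄, h₅⟩
      exact ⟨⟨hbc, h₁, h₃⟩, h₄, fun z hz => h₅ ⟨by rwa [h₂ hz], hz.2⟩, h₅⟩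
    · rintro ⟨⟨hbc, h₁, h₂⟩, h₃, h₄, h₅⟩
      refine ⟨hbc, ⟨h₁, fun z hz => ?_⟩, h₂, h₃, h₅⟩
      obtain rfl : z = a := h₄ hz
      exact h₁ ⟨hz.1, ha'⟩

theorem IsSimplePath.reverse {l : List E} (h : IsSimplePath l) : IsSimplePath l.reverse := by
  induction l using chainTrace.induct with
  | case1 => trivial
  | case2 a => trivial
  | case3 a b l ih =>
    obtain ⟨hab, hinter, hl⟩ := h
    have ih := ih hl
    have htrace := chainTrace_reverse (b :: l)
    have hb : b ∈ chainTrace (b :: l) := head_mem_chainTrace b l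
    rw [List.reverse_cons] at ih htrace
    rw [List.reverse_cons, List.reverse_cons, List.append_assoc, List.singleton_append,
      isSimplePath_append_cons, htrace]
    refine ⟨ih, ⟨hab.symm, inter_subset_right, trivial⟩, ?_⟩
    rintro z ⟨hz, hz' | rfl⟩
    · exact hinter ⟨segment_symm ℝ b a ▸ hz', hz⟩
    · exact hinter ⟨left_mem_segment ℝ z b, hz⟩

theorem IsSimplePath.nodup {l : List E} (h : IsSimplePath l) : l.Nodup := by
  induction l using chainTrace.induct with
  | case1 => simp
  | case2 a => simp
  | case3 a b l ih =>
    exact List.nodup_cons.2 ⟨fun ha => h.1 (h.2.1 ⟨left_mem_segment ℝ a b,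
      mem_chainTrace_of_mem ha⟩), ih h.2.2⟩

theorem segment_eq_union_of_mem {a b c : E} (hb : b ∈ segment ℝ a c) :
    segment ℝ a c = segment ℝ a b ∪ segment ℝ b c := by
  refine Subset.antisymm (fun z hz => ?_) (union_subset ?_ ?_)
  · rw [← insert_endpoints_openSegment] at hz
    rw [segment_eq_image_lineMap] at hb
    rcases hz with rfl | rfl | hz
    · exact .inl (left_mem_segment ℝ z b)
    · exact .inr (right_mem_segment ℝ b z)
    · rcases openSegment_subset_union a c (image_subset_range _ _ hb) hz with rfl | hz | hz
      · exact .inl (right_mem_segment ℝ a z)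
      · exact .inl (openSegment_subset_segment ℝ a b hz)
      · exact .inr (openSegment_subset_segment ℝ b c hz)
  · exact (convex_segment a c).segment_subset (left_mem_segment ℝ a c) hb
  · exact (convex_segment a c).segment_subset hb (right_mem_segment ℝ a c)

theorem IsSimplePath.wbtw_of_collinear {a b c : E} {l : List E}
    (h : IsSimplePath (a :: b :: c :: l)) (hcol : Collinear ℝ {a, b, c}) : Wbtw ℝ a b c := by
  obtain ⟨hab, hinter, hbc, -⟩ := h
  rcases hcol.wbtw_or_wbtw_or_wbtw with hb | hc | ha
  · exact hb
  · have hc : c ∈ segment ℝ a b := mem_segment_iff_wbtw.2 hc.symm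
    exact absurd (hinter ⟨hc, .inl (right_mem_segment ℝ b c)⟩) hbc.symm
  · have ha : a ∈ segment ℝ b c := mem_segment_iff_wbtw.2 ha.symm
    exact absurd (hinter ⟨left_mem_segment ℝ a b, .inl ha⟩) hab

theorem chainTrace_remove_corner (l₁ : List E) {a b c : E} (l₂ : List E) (hb : b ∈ segment ℝ a c) :
    chainTrace (l₁ ++ a :: c :: l₂) = chainTrace (l₁ ++ a :: b :: c :: l₂) := by
  rw [chainTrace_append_cons, chainTrace_append_cons l₁ a (b :: c :: l₂)]
  simp only [chainTrace, segment_eq_union_of_mem hb, union_assoc]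

theorem IsSimplePath.remove_corner {l₁ : List E} {a b c : E} {l₂ : List E}
    (h : IsSimplePath (l₁ ++ a :: b :: c :: l₂)) (hb : b ∈ segment ℝ a c) :
    IsSimplePath (l₁ ++ a :: c :: l₂) := by
  obtain ⟨hl₁, ⟨hab, hinter, hbc, hinter', hl₂⟩, hmeet⟩ := isSimplePath_append_cons.1 h
  refine isSimplePath_append_cons.2 ⟨hl₁, ⟨?_, ?_, hl₂⟩, ?_⟩
  · rintro rfl
    exact hab (by simpa [eq_comm] using hb)
  · rw [segment_eq_union_of_mem hb, union_inter_distrib_right]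
    refine union_subset (fun z hz => ?_) hinter'
    obtain rfl : z = b := hinter ⟨hz.1, .inr hz.2⟩
    exact hinter' ⟨left_mem_segment ℝ z c, hz.2⟩
  · have htrace := chainTrace_remove_corner [] l₂ hb
    simp only [List.nil_append] at htrace
    rwa [htrace]

end Chains

theorem chainSet_cons_cons (a b : Pt) (l : List Pt) :
    chainSet (a :: b :: l) = segment ℝ a b ∪ chainSet (b :: l) := by
  simp [chainSet, chainSegs]

theorem chainSet_eq_chainTrace {l : List Pt} (hl : 2 ≤ l.length) : chainSet l = chainTrace l := by
  match l, hl with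
  | [a, b], _ => simp [chainSet, chainSegs, chainTrace, right_mem_segment]
  | a :: b :: c :: l, _ =>
    rw [chainSet_cons_cons, chainSet_eq_chainTrace (l := b :: c :: l) (by simp)]
    rfl

theorem chainSet_subset_chainTrace (l : List Pt) : chainSet l ⊆ chainTrace l := by
  match l with
  | [] => simp [chainSet, chainSegs]
  | [_] => simp [chainSet, chainSegs]
  | a :: b :: l => exact (chainSet_eq_chainTrace (by simp)).subset

theorem isSimpleChain_cons_cons_cons {a b c : Pt} {l : List Pt} :
    IsSimpleChain (a :: b :: c :: l) ↔ a ∉ b :: c :: l ∧ segment ℝ a b ∩ segment ℝ b c ⊆ {b} ∧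
      Disjoint (segment ℝ a b) (chainSet (c :: l)) ∧ IsSimpleChain (b :: c :: l) := by
  have hsegs : chainSegs (a :: b :: c :: l) = (a, b) :: (b, c) :: chainSegs (c :: l) := rfl
  have hsegs' : chainSegs (b :: c :: l) = (b, c) :: chainSegs (c :: l) := rfl
  unfold IsSimpleChain
  simp only [hsegs, hsegs', List.get_eq_getElem, List.nodup_cons (a := a), chainSet,
    disjoint_iUnion_right]
  constructor
  · rintro ⟨-, ⟨ha, hnodup⟩, h⟩
    refine ⟨ha, by simpa using h 0 1 one_pos (by simp) (by simp), fun s hs => ?_, by simp, hnodup,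
      fun i j hij hi hj => ?_⟩
    · obtain ⟨j, hj, rfl⟩ := List.getElem_of_mem hs
      simpa [disjoint_iff_inter_eq_empty] using h 0 (j + 2) (by simp) (by simp) (by simpa using hj)
    · simpa using h (i + 1) (j + 1) (by simpa using hij) (by simpa using hi) (by simpa using hj)
  · rintro ⟨ha, hab, hdisj, -, hnodup, h⟩
    refine ⟨by simp, ⟨ha, hnodup⟩, fun i j hij hi hj => ?_⟩
    match i, j, hij with
    | 0, 1, _ => simpa using hab
    | 0, j + 2, _ =>
      simpa [disjoint_iff_inter_eq_empty] using hdisj _ (List.getElem_mem (by simpa using hj))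
    | i + 1, j + 1, hij =>
      simpa using h i j (by simpa using hij) (by simpa using hi) (by simpa using hj)

theorem isSimpleChain_iff {l : List Pt} : IsSimpleChain l ↔ 2 ≤ l.length ∧ IsSimplePath l := by
  match l with
  | [] => simp [IsSimpleChain]
  | [_] => simp [IsSimpleChain]
  | [a, b] => simp [IsSimpleChain, IsSimplePath, chainSegs, chainTrace]; omega
  | a :: b :: c :: l =>
    have ih : IsSimpleChain (b :: c :: l) ↔ 2 ≤ (b :: c :: l).length ∧ IsSimplePath (b :: c :: l) :=
      isSimpleChain_iff
    have htrace := chainSet_eq_chainTrace (l := b :: c :: l) (by simp)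
    have hpath : IsSimplePath (a :: b :: c :: l) ↔ a ≠ b ∧ (segment ℝ a b ∩ segment ℝ b c ⊆ {b} ∧
        segment ℝ a b ∩ chainSet (c :: l) ⊆ {b}) ∧ IsSimplePath (b :: c :: l) := by
      rw [← union_subset_iff, ← inter_union_distrib_left, ← chainSet_cons_cons, htrace]
      rfl
    rw [isSimpleChain_cons_cons_cons, ih]
    constructor
    · rintro ⟨ha, hb, hdisj, -, h⟩
      exact ⟨by simp, hpath.2 ⟨by rintro rfl; simp at ha, ⟨hb, by simp [hdisj.inter_eq]⟩, h⟩⟩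
    · rintro ⟨-, h⟩
      obtain ⟨-, ⟨hb, hc⟩, hbc⟩ := hpath.1 h
      refine ⟨(List.nodup_cons.1 h.nodup).1, hb, disjoint_left.2 fun z hz hz' => ?_, by simp, hbc⟩
      obtain rfl : z = b := hc ⟨hz, hz'⟩
      exact hbc.1 (hbc.2.1 ⟨left_mem_segment ℝ z c, chainSet_subset_chainTrace _ hz'⟩)

/-- The pieces of a polygonal chain: its corners, as degenerate segments, and its segments. -/
def IsPiece (l : List Pt) (a c : Pt) : Prop := (a = c ∧ a ∈ l) ∨ (a, c) ∈ chainSegs l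

theorem mem_chainSegs_iff_infix {l : List Pt} {a c : Pt} :
    (a, c) ∈ chainSegs l ↔ [a, c] <:+: l := by
  match l with
  | [] => simp [chainSegs]
  | [b] => simp [chainSegs, List.infix_cons_iff]
  | b :: d :: l =>
    rw [List.infix_cons_iff, ← mem_chainSegs_iff_infix]
    simp [chainSegs]

theorem mem_chainSegs_reverse {l : List Pt} {a c : Pt} :
    (a, c) ∈ chainSegs l.reverse ↔ (c, a) ∈ chainSegs l := by
  rw [mem_chainSegs_iff_infix, mem_chainSegs_iff_infix, ← List.reverse_infix]
  simp

theorem isPiece_reverse {l : List Pt} {a c : Pt} : IsPiece l.reverse a c ↔ IsPiece l c a := by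
  simp only [IsPiece, mem_chainSegs_reverse, List.mem_reverse]
  grind

theorem isPiece_singleton {a b c : Pt} : IsPiece [b] a c ↔ a = b ∧ c = b := by
  simp only [IsPiece, chainSegs, List.tail_cons, List.zip_nil_right, List.not_mem_nil, or_false,
    List.mem_singleton]
  grind

theorem isPiece_cons_cons {a b x y : Pt} {l : List Pt} :
    IsPiece (a :: b :: l) x y ↔ (x = a ∧ y = a) ∨ (x = a ∧ y = b) ∨ IsPiece (b :: l) x y := by
  simp only [IsPiece, chainSegs, List.tail_cons, List.zip_cons_cons, List.mem_cons, Prod.mk.injEq]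
  grind

theorem IsPiece.mem {l : List Pt} {a c : Pt} (h : IsPiece l a c) : a ∈ l ∧ c ∈ l := by
  rcases h with ⟨rfl, ha⟩ | h
  · exact ⟨ha, ha⟩
  · exact ⟨(List.of_mem_zip h).1, List.mem_of_mem_tail (List.of_mem_zip h).2⟩

theorem IsPiece.segment_subset_chainTrace {l : List Pt} {a c : Pt} (h : IsPiece l a c) :
    segment ℝ a c ⊆ chainTrace l := by
  match l with
  | [] => simp [IsPiece, chainSegs] at h
  | [b] =>
    obtain ⟨rfl, rfl⟩ := isPiece_singleton.1 h
    simp [chainTrace]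
  | b :: d :: l =>
    rcases isPiece_cons_cons.1 h with ⟨rfl, rfl⟩ | ⟨rfl, rfl⟩ | h
    · simpa using head_mem_chainTrace c (d :: l)
    · exact subset_union_left
    · exact h.segment_subset_chainTrace.trans subset_union_right

theorem IsSimplePath.eq_or_mem_ends {l : List Pt} (h : IsSimplePath l) {a c a' c' z : Pt}
    (hac : IsPiece l a c) (hac' : IsPiece l a' c') (hz : z ∈ segment ℝ a c)
    (hz' : z ∈ segment ℝ a' c') : (a = a' ∧ c = c') ∨ ((z = a ∨ z = c) ∧ (z = a' ∨ z = c')) := by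
  match l with
  | [] => simp [IsPiece, chainSegs] at hac
  | [b] =>
    rw [isPiece_singleton] at hac hac'
    grind
  | b :: d :: l =>
    obtain ⟨hbd, hinter, htail⟩ := h
    have head_tail : ∀ {x y x' y'}, x = b → (y = b ∨ y = d) → IsPiece (d :: l) x' y' →
        z ∈ segment ℝ x y → z ∈ segment ℝ x' y' → (z = x ∨ z = y) ∧ (z = x' ∨ z = y') := by
      rintro x y x' y' rfl hy hp hzx hzx'
      have hzd : z = d := by
        refine hinter ⟨?_, hp.segment_subset_chainTrace hzx'⟩
        rcases hy with rfl | rfl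
        · rw [segment_same] at hzx
          exact hzx ▸ left_mem_segment ℝ _ d
        · exact hzx
      have hd : IsPiece (d :: l) d d := .inl ⟨rfl, List.mem_cons_self⟩
      have := htail.eq_or_mem_ends hd hp (hzd ▸ left_mem_segment ℝ z z) hzx'
      rcases hy with rfl | rfl
      · rw [segment_same] at hzx
        exact absurd (hzx.symm.trans hzd) hbd
      · grind
    rw [isPiece_cons_cons, ← or_assoc, ← and_or_left] at hac hac'
    rcases hac with ⟨ha, hc⟩ | hac <;> rcases hac' with ⟨ha', hc'⟩ | hac'
    · subst ha ha'
      rcases hc with rfl | rfl <;> rcases hc' with rfl | rfl <;> simp_all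
    · exact .inr (head_tail ha hc hac' hz hz')
    · exact .inr (head_tail ha' hc' hac hz' hz).symm
    · exact htail.eq_or_mem_ends hac hac' hz hz'

theorem isChain_iff_forall_mem_chainSegs {R : Pt → Pt → Prop} {l : List Pt} :
    l.IsChain R ↔ ∀ s ∈ chainSegs l, R s.1 s.2 := by
  match l with
  | [] => simp [chainSegs]
  | [_] => simp [chainSegs]
  | a :: b :: l =>
    rw [List.isChain_cons_cons, isChain_iff_forall_mem_chainSegs]
    simp [chainSegs]

theorem isMonoChain_iff {l : List Pt} :
    IsMonoChain l ↔ l.IsChain (fun a b => a.2 ≤ b.2) ∨ l.IsChain (fun a b => b.2 ≤ a.2) :=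
  or_congr (List.isChain_map _) (List.isChain_map _)

theorem IsMonoChain.reverse {l : List Pt} (h : IsMonoChain l) : IsMonoChain l.reverse := by
  rw [isMonoChain_iff, List.isChain_reverse, List.isChain_reverse]
  exact (isMonoChain_iff.1 h).symm

theorem genuineBends_iff {l : List Pt} :
    GenuineBends l ↔ ∀ l₁ a b c l₂, l = l₁ ++ a :: b :: c :: l₂ → ¬ Collinear ℝ {a, b, c} := by
  constructor
  · rintro h l₁ a b c l₂ rfl
    simpa using h l₁.length (by simp)
  · intro h i hi
    refine h (l.take i) _ _ _ (l.drop (i + 3)) ?_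
    conv_lhs => rw [← List.take_append_drop i l]
    rw [List.drop_eq_getElem_cons, List.drop_eq_getElem_cons, List.drop_eq_getElem_cons]
    rfl

theorem GenuineBends.reverse {l : List Pt} (h : GenuineBends l) : GenuineBends l.reverse := by
  rw [genuineBends_iff] at h ⊢
  intro l₁ a b c l₂ hl hcol
  refine h l₂.reverse c b a l₁.reverse (by simpa using congrArg List.reverse hl) ?_
  rwa [insert_comm c, pair_comm c, insert_comm b]

/-- Two points on a common horizontal or vertical line. -/
def AxisParallel (a b : Pt) : Prop := a.1 = b.1 ∨ a.2 = b.2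

theorem AxisParallel.symm {a b : Pt} (h : AxisParallel a b) : AxisParallel b a :=
  h.imp Eq.symm Eq.symm

theorem isOrthoChain_iff {l : List Pt} : IsOrthoChain l ↔ l.IsChain AxisParallel :=
  (isChain_iff_forall_mem_chainSegs (R := AxisParallel)).symm

theorem AxisParallel.of_wbtw {a b c : Pt} (h : AxisParallel a b) (hab : a ≠ b)
    (hb : Wbtw ℝ a b c) : AxisParallel a c := by
  obtain ⟨t, -, rfl⟩ := hb
  have ht : t ≠ 0 := by rintro rfl; simp at hab
  simpa [AxisParallel, AffineMap.lineMap_apply, ht, sub_eq_zero, eq_comm] using h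

/-- A simple axis-parallel path with integer corners from `p` to `q`. -/
structure IsOrthPath (p q : Pt) (l : List Pt) : Prop where
  head : l.head? = some p
  last : l.getLast? = some q
  simple : IsSimplePath l
  axisParallel : l.IsChain AxisParallel
  int : ∀ x ∈ l, IsIntPt x

theorem IsOrthPath.exists_append_cons {p q : Pt} {l : List Pt} (h : IsOrthPath p q l)
    (hpq : p ≠ q) : ∃ m, l = p :: (m ++ [q]) := by
  obtain ⟨m, rfl⟩ := List.head?_eq_some_iff.1 h.head
  obtain ⟨m', hm⟩ := List.getLast?_eq_some_iff.1 h.last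
  match m' with
  | [] => exact absurd (List.cons.inj hm).1 hpq
  | x :: m' => exact ⟨m', by rw [(List.cons.inj hm).2, List.append_eq]⟩

theorem IsOrthPath.reverse {p q : Pt} {l : List Pt} (h : IsOrthPath p q l) :
    IsOrthPath q p l.reverse where
  head := by rw [List.head?_reverse, h.last]
  last := by rw [List.getLast?_reverse, h.head]
  simple := h.simple.reverse
  axisParallel := List.isChain_reverse.2 (h.axisParallel.imp fun _ _ => AxisParallel.symm)
  int x hx := h.int x (List.mem_reverse.1 hx)

theorem IsOrthPath.append_cons {p q r : Pt} {l₁ l₂ : List Pt} (h₁ : IsOrthPath p q (l₁ ++ [q]))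
    (h₂ : IsOrthPath q r (q :: l₂)) (h : chainTrace (l₁ ++ [q]) ∩ chainTrace (q :: l₂) ⊆ {q}) :
    IsOrthPath p r (l₁ ++ q :: l₂) where
  head := by have := h₁.head; cases l₁ <;> simpa using this
  last := by simpa [List.getLast?_append] using h₂.last
  simple := isSimplePath_append_cons.2 ⟨h₁.simple, h₂.simple, h⟩
  axisParallel := List.isChain_split.2 ⟨h₁.axisParallel, h₂.axisParallel⟩
  int x hx :=
    (List.mem_append.1 hx).elim (fun hx => h₁.int x (List.mem_append_left _ hx)) (h₂.int x)

theorem IsOrthPath.remove_corner {p q a b c : Pt} {l₁ l₂ : List Pt}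
    (h : IsOrthPath p q (l₁ ++ a :: b :: c :: l₂)) (hb : Wbtw ℝ a b c) :
    IsOrthPath p q (l₁ ++ a :: c :: l₂) where
  head := by have := h.head; cases l₁ <;> simpa using this
  last := by simpa [List.getLast?_append, List.getLast?_cons_cons] using h.last
  simple := h.simple.remove_corner (mem_segment_iff_wbtw.2 hb)
  axisParallel := by
    have hab := (isSimplePath_append_cons.1 h.simple).2.1.1
    have := h.axisParallel
    rw [List.isChain_append_cons_cons, List.isChain_cons_cons] at this
    exact List.isChain_append_cons_cons.2 ⟨this.1, this.2.1.of_wbtw hab hb, this.2.2.2⟩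
  int x hx := h.int x (by grind)

theorem IsOrthPath.exists_genuineBends {p q : Pt} {l : List Pt} (h : IsOrthPath p q l) :
    ∃ l', IsOrthPath p q l' ∧ chainTrace l' = chainTrace l ∧ l'.Sublist l ∧ GenuineBends l' := by
  induction hn : l.length using Nat.strong_induction_on generalizing l with
  | _ n ih =>
    by_cases hbends : GenuineBends l
    · exact ⟨l, h, rfl, List.Sublist.refl l, hbends⟩
    rw [genuineBends_iff] at hbends
    push Not at hbends
    obtain ⟨l₁, a, b, c, l₂, rfl, hcol⟩ := hbends
    have hb : Wbtw ℝ a b c := (isSimplePath_append_cons.1 h.simple).2.1.wbtw_of_collinear hcol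
    obtain ⟨l', hl', htrace, hsub, hbends⟩ := ih _ (by simp [← hn]) (h.remove_corner hb) rfl
    refine ⟨l', hl', ?_, hsub.trans (by simp), hbends⟩
    rw [htrace, chainTrace_remove_corner _ _ (mem_segment_iff_wbtw.2 hb)]

/-- There is an axis-parallel path with integer corners from `p` to `q` that covers exactly `T`;
it is ascending if `up` holds and descending if `down` holds. -/
def HasOrthPath (p q : Pt) (T : Set Pt) (up down : Prop) : Prop :=
  ∃ l, IsOrthPath p q l ∧ chainTrace l = T ∧ (up → l.IsChain fun a b => a.2 ≤ b.2) ∧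
    (down → l.IsChain fun a b => b.2 ≤ a.2)

namespace HasOrthPath

variable {p q r : Pt} {T T' : Set Pt} {up down up' down' : Prop}

theorem mono (h : HasOrthPath p q T up down) (hup : up' → up) (hdown : down' → down) :
    HasOrthPath p q T up' down' := by
  obtain ⟨l, hl, hT, hu, hd⟩ := h
  exact ⟨l, hl, hT, hu ∘ hup, hd ∘ hdown⟩

theorem isIntPt_left (h : HasOrthPath p q T up down) : IsIntPt p := by
  obtain ⟨l, hl, -⟩ := h
  exact hl.int p (List.mem_of_head? hl.head)

theorem isIntPt_right (h : HasOrthPath p q T up down) : IsIntPt q := by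
  obtain ⟨l, hl, -⟩ := h
  exact hl.int q (List.mem_of_getLast? hl.last)

theorem left_mem (h : HasOrthPath p q T up down) : p ∈ T := by
  obtain ⟨l, hl, rfl, -⟩ := h
  exact mem_chainTrace_of_mem (List.mem_of_head? hl.head)

theorem right_mem (h : HasOrthPath p q T up down) : q ∈ T := by
  obtain ⟨l, hl, rfl, -⟩ := h
  exact mem_chainTrace_of_mem (List.mem_of_getLast? hl.last)

theorem trans (h : HasOrthPath p q T up down) (h' : HasOrthPath q r T' up down)
    (hTT' : T ∩ T' ⊆ {q}) : HasOrthPath p r (T ∪ T') up down := by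
  obtain ⟨l, hl, rfl, hu, hd⟩ := h
  obtain ⟨l', hl', rfl, hu', hd'⟩ := h'
  obtain ⟨m, rfl⟩ := List.getLast?_eq_some_iff.1 hl.last
  obtain ⟨m', rfl⟩ := List.head?_eq_some_iff.1 hl'.head
  exact ⟨m ++ q :: m', hl.append_cons hl' hTT', chainTrace_append_cons m q m',
    fun h => List.isChain_split.2 ⟨hu h, hu' h⟩, fun h => List.isChain_split.2 ⟨hd h, hd' h⟩⟩

theorem symm (h : HasOrthPath p q T up down) : HasOrthPath q p T down up := by
  obtain ⟨l, hl, rfl, hu, hd⟩ := h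
  exact ⟨l.reverse, hl.reverse, chainTrace_reverse l, fun h => List.isChain_reverse.2 (hd h),
    fun h => List.isChain_reverse.2 (hu h)⟩

theorem of_axisParallel (hp : IsIntPt p) (hq : IsIntPt q) (hpq : AxisParallel p q) :
    HasOrthPath p q (segment ℝ p q) (p.2 ≤ q.2) (q.2 ≤ p.2) := by
  by_cases h : p = q
  · subst h
    exact ⟨[p], ⟨rfl, rfl, trivial, by simp, by simpa using hp⟩, by simp [chainTrace], by simp,
      by simp⟩
  · exact ⟨[p, q], ⟨rfl, rfl, ⟨h, by simp [chainTrace], trivial⟩, by simpa using hpq,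
      by simp [hp, hq]⟩, by simp [chainTrace, right_mem_segment], by simp, by simp⟩

end HasOrthPath

theorem mem_segment_horizontal {y x x' : ℝ} {z : Pt} :
    z ∈ segment ℝ ((x, y) : Pt) (x', y) ↔ z.2 = y ∧ z.1 ∈ uIcc x x' := by
  rw [← Prod.image_mk_segment_left, segment_eq_uIcc]
  exact ⟨by rintro ⟨w, hw, rfl⟩; exact ⟨rfl, hw⟩, fun ⟨hy, hx⟩ => ⟨z.1, hx, by rw [← hy]⟩⟩

theorem mem_segment_vertical {x y y' : ℝ} {z : Pt} :
    z ∈ segment ℝ ((x, y) : Pt) (x, y') ↔ z.1 = x ∧ z.2 ∈ uIcc y y' := by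
  rw [← Prod.image_mk_segment_right, segment_eq_uIcc]
  exact ⟨by rintro ⟨w, hw, rfl⟩; exact ⟨rfl, hw⟩, fun ⟨hx, hy⟩ => ⟨z.2, hy, by rw [← hx]⟩⟩

/-! ### Columns for the items of a layer -/

theorem exists_int_of_finite {α γ : Type*} [Finite α] [LinearOrder γ] (f : α → γ) :
    ∃ X : α → ℤ, ∀ a a', f a < f a' → X a < X a' := by
  have := Fintype.ofFinite (range f)
  refine ⟨fun a => ((monoEquivOfFin (range f) rfl).symm ⟨f a, mem_range_self a⟩ : ℕ),
    fun a a' h => ?_⟩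
  rwa [Nat.cast_lt, Fin.val_fin_lt, OrderIso.lt_iff_lt]

section Layers

variable {α β : Type*} [LinearOrder β] (layer : α → ℤ) (bot : α → β) (top : α → WithBot β)

/-- The key by which the items of one layer are sorted: first by their position `bot` on the row
below the layer, then by their position `top` on the row above, where `⊥` stands for an item that
does not reach the row above. -/
def sortKey (a : α) : β ×ₗ WithBot β := toLex (bot a, top a)

/-- Two items of one layer do not cross. -/
def LayersNoncrossing : Prop :=
  ∀ a a', layer a = layer a' → bot a < bot a' → top a' ≠ ⊥ → top a ≤ top a'

/-- The columns `X` of the items in the layers below `N` reflect the left-to-right order within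
every layer and on every row between two consecutive layers. -/
structure RespectsLayersBelow (N : ℤ) (X : α → ℤ) : Prop where
  same_layer : ∀ a a', layer a < N → layer a = layer a' → sortKey bot top a < sortKey bot top a' →
    X a < X a'
  top_lt_bot : ∀ a a', layer a' < N → layer a' = layer a + 1 → top a ≠ ⊥ → top a < bot a' →
    X a < X a'
  bot_lt_top : ∀ a a', layer a' < N → layer a' = layer a + 1 → bot a' < top a → X a' < X a

variable {layer bot top}

theorem LayersNoncrossing.top_le_top (h : LayersNoncrossing layer bot top) {a a' : α}
    (hlayer : layer a = layer a') (hkey : sortKey bot top a ≤ sortKey bot top a')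
    (htop : top a' ≠ ⊥) : top a ≤ top a' :=
  (Prod.Lex.toLex_le_toLex.1 hkey).elim (h a a' hlayer · htop) And.right

open Classical in
/-- The rightmost column under `X` of the items in the layer below layer `N` that reach the row
between the two layers to the left of the position `y`; it is `⊥` if there are none. -/
noncomputable def barrier [Fintype α] (layer : α → ℤ) (top : α → WithBot β) (N : ℤ) (X : α → ℤ)
    (y : β) : WithBot ℤ :=
  ({a | layer a + 1 = N ∧ top a ≠ ⊥ ∧ top a < y} : Finset α).sup fun a => (X a : WithBot ℤ)

theorem barrier_mono [Fintype α] (N : ℤ) (X : α → ℤ) : Monotone (barrier layer top N X) :=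
  fun y y' hy => Finset.sup_mono fun a ha => by
    simp only [Finset.mem_filter_univ] at ha ⊢
    exact ⟨ha.1, ha.2.1, ha.2.2.trans_le (WithBot.coe_le_coe.2 hy)⟩

theorem le_barrier [Fintype α] {N : ℤ} (X : α → ℤ) {a : α} {y : β} (hl : layer a + 1 = N)
    (ht : top a ≠ ⊥) (hy : top a < y) : X a ≤ barrier layer top N X y :=
  Finset.le_sup (f := fun a => (X a : WithBot ℤ)) (by simp [*])

theorem RespectsLayersBelow.barrier_lt [Fintype α] (hcross : LayersNoncrossing layer bot top)
    {N : ℤ} {X : α → ℤ} (hX : RespectsLayersBelow layer bot top N X) {a : α} {y : β}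
    (hl : layer a + 1 = N) (hy : y < top a) : barrier layer top N X y < X a := by
  refine (Finset.sup_lt_iff (WithBot.bot_lt_coe _)).2 fun c hc => WithBot.coe_lt_coe.2 ?_
  simp only [Finset.mem_filter_univ] at hc
  refine hX.same_layer c a (by lia) (by lia) (lt_of_not_ge fun hkey => ?_)
  exact ((hc.2.2.trans hy).trans_le (hcross.top_le_top (by lia) hkey hc.2.1)).false

/-- The new column of an item of layer `N` goes immediately to the right of all items of the layer
below that reach the common row to its left; ties are broken by the sorting key. -/
theorem RespectsLayersBelow.exists_succ [Finite α] (hcross : LayersNoncrossing layer bot top)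
    {N : ℤ} {X : α → ℤ} (hX : RespectsLayersBelow layer bot top N X) :
    ∃ X', RespectsLayersBelow layer bot top (N + 1) X' := by
  classical
  cases nonempty_fintype α
  let rank (a : α) : WithBot ℤ ×ₗ WithBot (β ×ₗ WithBot β) :=
    if layer a < N then toLex (X a, ⊥) else toLex (barrier layer top N X (bot a), sortKey bot top a)
  have rank_old : ∀ a, layer a < N → rank a = toLex (↑(X a), ⊥) := fun a h => if_pos h
  have rank_new : ∀ a, ¬ layer a < N →
      rank a = toLex (barrier layer top N X (bot a), ↑(sortKey bot top a)) := fun a h => if_neg h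
  obtain ⟨X', hX'⟩ := exists_int_of_finite rank
  refine ⟨X', fun a a' hN hl hkey => hX' a a' ?_, fun a a' hN hl ht hlt => hX' a a' ?_,
    fun a a' hN hl hlt => hX' a' a ?_⟩ <;> by_cases h : layer a' < N
  · rw [rank_old a (by lia), rank_old a' h]
    exact Prod.Lex.toLex_lt_toLex.2
      (.inl (WithBot.coe_lt_coe.2 (hX.same_layer a a' (by lia) hl hkey)))
  · rw [rank_new a (by lia), rank_new a' h, Prod.Lex.toLex_lt_toLex, WithBot.coe_lt_coe]
    have hbot : bot a ≤ bot a' := (Prod.Lex.monotone_fst_ofLex hkey.le)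
    exact (barrier_mono N X hbot).lt_or_eq.imp id fun h => ⟨h, hkey⟩
  · rw [rank_old a (by lia), rank_old a' h]
    exact Prod.Lex.toLex_lt_toLex.2 (.inl (WithBot.coe_lt_coe.2 (hX.top_lt_bot a a' h hl ht hlt)))
  · rw [rank_old a (by lia), rank_new a' h, Prod.Lex.toLex_lt_toLex]
    exact (le_barrier X (by lia) ht hlt).lt_or_eq.imp id fun h => ⟨h, WithBot.bot_lt_coe _⟩
  · rw [rank_old a (by lia), rank_old a' h]
    exact Prod.Lex.toLex_lt_toLex.2 (.inl (WithBot.coe_lt_coe.2 (hX.bot_lt_top a a' h hl hlt)))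
  · rw [rank_old a (by lia), rank_new a' h]
    exact Prod.Lex.toLex_lt_toLex.2 (.inl (hX.barrier_lt hcross (by lia) hlt))

theorem LayersNoncrossing.exists_respectsLayersBelow [Finite α]
    (hcross : LayersNoncrossing layer bot top) :
    ∃ X, ∀ N, RespectsLayersBelow layer bot top N X := by
  obtain ⟨m, hm⟩ := (finite_range layer).bddBelow
  obtain ⟨M, hM⟩ := (finite_range layer).bddAbove
  have hm : ∀ a, m ≤ layer a := fun a => hm (mem_range_self a)
  have hM : ∀ a, layer a ≤ M := fun a => hM (mem_range_self a)
  have exists_below : ∀ N, m ≤ N → ∃ X, RespectsLayersBelow layer bot top N X := by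
    intro N hN
    induction N, hN using Int.leInduction with
    | base => exact ⟨0, by grind, by grind, by grind⟩
    | succ N _ ih => exact ih.elim fun X hX => hX.exists_succ hcross
  obtain ⟨X, hX⟩ := exists_below (max m (M + 1)) (le_max_left _ _)
  have hlt : ∀ a, layer a < max m (M + 1) := fun a => by grind
  exact ⟨X, fun N => ⟨fun a a' _ => hX.same_layer a a' (hlt a),
    fun a a' _ => hX.top_lt_bot a a' (hlt a'), fun a a' _ => hX.bot_lt_top a a' (hlt a')⟩⟩

theorem RespectsLayersBelow.eq_of_eq {N : ℤ} {X : α → ℤ}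
    (hX : RespectsLayersBelow layer bot top N X) {a a' : α} (hN : layer a < N)
    (hl : layer a = layer a') (h : X a = X a') : bot a = bot a' ∧ top a = top a' := by
  have hkey : sortKey bot top a = sortKey bot top a' :=
    le_antisymm (not_lt.1 fun hlt => (hX.same_layer a' a (by lia) hl.symm hlt).ne' h)
      (not_lt.1 fun hlt => (hX.same_layer a a' hN hl hlt).ne h)
  exact Prod.ext_iff.1 (toLex.injective hkey)

variable (layer bot top) in
/-- The item `a` meets row `k`, the row below layer `k`, at the position `x`. -/
def MeetsRowAt (k : ℤ) (a : α) (x : β) : Prop :=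
  (layer a = k ∧ bot a = x) ∨ (layer a + 1 = k ∧ top a = x)

theorem RespectsLayersBelow.lt_of_meetsRowAt (hcross : LayersNoncrossing layer bot top) {N : ℤ}
    {X : α → ℤ} (hX : RespectsLayersBelow layer bot top N X) {k : ℤ} (hk : k < N) {a a' : α}
    {x x' : β} (ha : MeetsRowAt layer bot top k a x) (ha' : MeetsRowAt layer bot top k a' x')
    (hlt : x < x') : X a < X a' := by
  rcases ha with ⟨hl, rfl⟩ | ⟨hl, ht⟩ <;> rcases ha' with ⟨hl', rfl⟩ | ⟨hl', ht'⟩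
  · exact hX.same_layer a a' (by lia) (by lia) (Prod.Lex.toLex_lt_toLex.2 (.inl hlt))
  · exact hX.bot_lt_top a' a (by lia) (by lia) (ht' ▸ WithBot.coe_lt_coe.2 hlt)
  · exact hX.top_lt_bot a a' (by lia) (by lia) (ht ▸ WithBot.coe_ne_bot)
      (ht ▸ WithBot.coe_lt_coe.2 hlt)
  · refine hX.same_layer a a' (by lia) (by lia) (lt_of_not_ge fun hkey => ?_)
    have hle := hcross.top_le_top (by lia) hkey (ht ▸ WithBot.coe_ne_bot)
    rw [ht, ht', WithBot.coe_le_coe] at hle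
    exact hle.not_gt hlt

theorem LayersNoncrossing.exists_columns [Finite α] (hcross : LayersNoncrossing layer bot top) :
    ∃ X : α → ℤ,
      (∀ {k a a' x x'}, MeetsRowAt layer bot top k a x → MeetsRowAt layer bot top k a' x' →
        x < x' → X a < X a') ∧
      (∀ {a a'}, layer a = layer a' → X a = X a' → bot a = bot a' ∧ top a = top a') :=
  hcross.exists_respectsLayersBelow.imp fun _ hX =>
    ⟨fun {k _ _ _ _} => (hX (k + 1)).lt_of_meetsRowAt hcross (lt_add_one k),
      fun {a _} => (hX (layer a + 1)).eq_of_eq (lt_add_one _)⟩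

end Layers

/-! ### Planar systems and their layers -/

/-- The `x`-coordinate at height `y` of the line through `a` and `c`, and that of `a` if this line
is horizontal. -/
noncomputable def xAt (a c : Pt) (y : ℝ) : ℝ := a.1 + (y - a.2) / (c.2 - a.2) * (c.1 - a.1)

theorem xAt_self (a : Pt) (y : ℝ) : xAt a a y = a.1 := by simp [xAt]

theorem xAt_left (a c : Pt) : xAt a c a.2 = a.1 := by simp [xAt]

theorem xAt_right {a c : Pt} (h : a.2 ≠ c.2) : xAt a c c.2 = c.1 := by
  rw [xAt, div_self (sub_ne_zero.2 h.symm)]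
  ring

theorem xAt_add (a c : Pt) (y r : ℝ) :
    xAt a c (y + r) = (1 - r) * xAt a c y + r * xAt a c (y + 1) := by
  unfold xAt
  ring

theorem xAt_mem_segment {a c : Pt} {y : ℝ} (h : a.2 < c.2) (hy : y ∈ Icc a.2 c.2) :
    (xAt a c y, y) ∈ segment ℝ a c := by
  have hpos : 0 < c.2 - a.2 := sub_pos.2 h
  rw [segment_eq_image]
  refine ⟨(y - a.2) / (c.2 - a.2), ⟨div_nonneg (sub_nonneg.2 hy.1) hpos.le,
    (div_le_one hpos).2 (by linarith [hy.2])⟩, Prod.ext ?_ ?_⟩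
  · simp only [xAt, Prod.fst_add, Prod.smul_fst, smul_eq_mul]
    ring
  · simp only [Prod.snd_add, Prod.smul_snd, smul_eq_mul]
    field_simp
    ring

/-- The segment from `a` up to `c` crosses the strip between the rows `k` and `k + 1`. -/
def Spans (a c : Pt) (k : ℤ) : Prop := a.2 ≤ k ∧ (k : ℝ) + 1 ≤ c.2

theorem Spans.lt {a c : Pt} {k : ℤ} (h : Spans a c k) : a.2 < c.2 := by linarith [h.1, h.2]

theorem Spans.ne {a c : Pt} {k : ℤ} (h : Spans a c k) : a ≠ c := fun hac => (hac ▸ h.lt).false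

theorem Spans.xAt_mem_segment {a c : Pt} {k : ℤ} (h : Spans a c k) {r : ℝ} (hr : r ∈ Icc 0 1) :
    (xAt a c (k + r), k + r) ∈ segment ℝ a c :=
  _root_.xAt_mem_segment h.lt ⟨by linarith [h.1, hr.1], by linarith [h.2, hr.2]⟩

/-- A finite planar system of straight segments between points on integer rows. `S a c` says that
the segment from `a` to `c` belongs to the system, and `S p p` that `p` is one of its points: the
points are the degenerate segments. -/
structure IsPlanarSystem (S : Pt → Pt → Prop) : Prop where
  symm : ∀ {a c}, S a c → S c a
  left : ∀ {a c}, S a c → S a a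
  finite : {p | S p p}.Finite
  snd_int : ∀ {p}, S p p → ∃ k : ℤ, p.2 = k
  eq_or_mem_ends : ∀ {a c a' c' z}, S a c → S a' c' → z ∈ segment ℝ a c → z ∈ segment ℝ a' c' →
    s(a, c) = s(a', c') ∨ (z = a ∨ z = c) ∧ (z = a' ∨ z = c')

/-- The system `S` has an item `(a, c, k)` in layer `k`: the part of the segment `a c` between the
rows `k` and `k + 1`, or the point `a` on row `k` if `a = c`. -/
def IsItem (S : Pt → Pt → Prop) (i : Pt × Pt × ℤ) : Prop :=
  (i.1 = i.2.1 ∧ S i.1 i.1 ∧ i.1.2 = i.2.2) ∨ (S i.1 i.2.1 ∧ Spans i.1 i.2.1 i.2.2)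

/-- In row `k`, the column `ξ` belongs to the position `x` under the assignment `X` of columns to
items. -/
inductive IsColumn (S : Pt → Pt → Prop) (X : Pt → Pt → ℤ → ℤ) (k : ℤ) : ℝ → ℤ → Prop
  | point {p : Pt} (hp : S p p) (hk : p.2 = k) : IsColumn S X k p.1 (X p p k)
  | above {a c : Pt} (hac : S a c) (hk : Spans a c k) : IsColumn S X k (xAt a c k) (X a c k)
  | below {a c : Pt} (hac : S a c) (hk : Spans a c (k - 1)) :
      IsColumn S X k (xAt a c k) (X a c (k - 1))

/-- The columns assigned by `X` to the items of `S` respect the left-to-right order in every row,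
and no two segments share a column between two rows. -/
structure IsColumnAssignment (S : Pt → Pt → Prop) (X : Pt → Pt → ℤ → ℤ) : Prop where
  finite : {ξ | ∃ k x, IsColumn S X k x ξ}.Finite
  lt : ∀ {k x x' ξ ξ'}, IsColumn S X k x ξ → IsColumn S X k x' ξ' → x < x' → ξ < ξ'
  inj : ∀ {a c a' c' k}, S a c → S a' c' → Spans a c k → Spans a' c' k → X a c k = X a' c' k →
    a = a' ∧ c = c'

namespace IsPlanarSystem

variable {S : Pt → Pt → Prop} (hS : IsPlanarSystem S)
include hS

theorem right {a c : Pt} (h : S a c) : S c c := hS.left (hS.symm h)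

theorem eq_of_xAt_eq {a c a' c' : Pt} {k : ℤ} (hac : S a c) (hac' : S a' c') (hk : Spans a c k)
    (hk' : Spans a' c' k) {r : ℝ} (hr : r ∈ Ioo 0 1)
    (hx : xAt a c (k + r) = xAt a' c' (k + r)) : a = a' ∧ c = c' := by
  have hz := hk.xAt_mem_segment (Ioo_subset_Icc_self hr)
  have hz' := hk'.xAt_mem_segment (Ioo_subset_Icc_self hr)
  rw [← hx] at hz'
  rcases hS.eq_or_mem_ends hac hac' hz hz' with h | ⟨h, -⟩
  · refine (Sym2.eq_iff.1 h).resolve_right ?_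
    rintro ⟨rfl, rfl⟩
    exact (hk.lt.trans hk'.lt).false
  · obtain ⟨n, hn⟩ : ∃ n : ℤ, (k + r : ℝ) = n := by
      have hrow : (k + r : ℝ) = a.2 ∨ (k + r : ℝ) = c.2 :=
        h.imp (congrArg Prod.snd) (congrArg Prod.snd)
      rcases hrow with hrow | hrow <;> rw [hrow]
      exacts [hS.snd_int (hS.left hac), hS.snd_int (hS.right hac)]
    have h₁ : k < n := by exact_mod_cast (by linarith [hr.1] : (k : ℝ) < n)
    have h₂ : n < k + 1 := by exact_mod_cast (by linarith [hr.2] : (n : ℝ) < k + 1)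
    lia

/-- If two segments changed sides between the rows, they would meet at height `k + r`, where `r`
divides the strip in the ratio of the gaps between them on the two rows. -/
theorem xAt_succ_le {a c a' c' : Pt} {k : ℤ} (hac : S a c) (hac' : S a' c') (hk : Spans a c k)
    (hk' : Spans a' c' k) (hlt : xAt a c k < xAt a' c' k) :
    xAt a c (k + 1) ≤ xAt a' c' (k + 1) := by
  by_contra! hgt
  have hd : 0 < (xAt a' c' k - xAt a c k) + (xAt a c (k + 1) - xAt a' c' (k + 1)) := by linarith
  set r := (xAt a' c' k - xAt a c k) /
    ((xAt a' c' k - xAt a c k) + (xAt a c (k + 1) - xAt a' c' (k + 1))) with hr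
  have hx : xAt a c (k + r) = xAt a' c' (k + r) := by
    rw [xAt_add a c, xAt_add a' c']
    linarith [(eq_div_iff hd.ne').1 hr]
  obtain ⟨rfl, rfl⟩ := hS.eq_of_xAt_eq hac hac' hk hk'
    ⟨div_pos (by linarith) hd, (div_lt_one hd).2 (by linarith)⟩ hx
  exact hlt.false

theorem finite_isItem : {i | IsItem S i}.Finite := by
  obtain ⟨lo, hlo⟩ := (hS.finite.image Prod.snd).bddBelow
  obtain ⟨hi, hhi⟩ := (hS.finite.image Prod.snd).bddAbove
  have hlo : ∀ {p : Pt}, S p p → lo ≤ p.2 := fun {p} hp => hlo ⟨p, hp, rfl⟩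
  have hhi : ∀ {p : Pt}, S p p → p.2 ≤ hi := fun {p} hp => hhi ⟨p, hp, rfl⟩
  refine (hS.finite.prod (hS.finite.prod (Set.finite_Icc ⌈lo⌉ ⌊hi⌋))).subset ?_
  rintro ⟨a, c, k⟩ (⟨hac, ha, hk⟩ | ⟨hac, hk⟩)
  · dsimp only at hac ha hk
    subst hac
    exact ⟨ha, ha, Int.ceil_le.2 (hk ▸ hlo ha), Int.le_floor.2 (hk ▸ hhi ha)⟩
  · exact ⟨hS.left hac, hS.right hac, Int.ceil_le.2 ((hlo (hS.left hac)).trans hk.1),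
      Int.le_floor.2 (by linarith [hhi (hS.right hac), hk.2])⟩

end IsPlanarSystem

/-- The layer of an item. -/
def itemLayer (i : Pt × Pt × ℤ) : ℤ := i.2.2

/-- The position of an item on the row below its layer. -/
noncomputable def itemBot (i : Pt × Pt × ℤ) : ℝ := xAt i.1 i.2.1 i.2.2

open Classical in
/-- The position of an item on the row above its layer; it is `⊥` for a point, which does not reach
that row. -/
noncomputable def itemTop (i : Pt × Pt × ℤ) : WithBot ℝ :=
  if i.1 = i.2.1 then ⊥ else (xAt i.1 i.2.1 (i.2.2 + 1) : ℝ)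

theorem Spans.itemTop_eq {a c : Pt} {k : ℤ} (h : Spans a c k) :
    itemTop (a, c, k) = (xAt a c (k + 1) : ℝ) := if_neg h.ne

theorem IsItem.spans_of_itemTop_ne_bot {S : Pt → Pt → Prop} {i : Pt × Pt × ℤ} (hi : IsItem S i)
    (h : itemTop i ≠ ⊥) : S i.1 i.2.1 ∧ Spans i.1 i.2.1 i.2.2 :=
  hi.resolve_left fun hi => h (if_pos hi.1)

theorem IsPlanarSystem.layersNoncrossing {S : Pt → Pt → Prop} (hS : IsPlanarSystem S) :
    LayersNoncrossing (fun i : {i // IsItem S i} => itemLayer i) (fun i => itemBot i)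
      (fun i => itemTop i) := by
  rintro ⟨⟨a, c, k⟩, hi⟩ ⟨⟨a', c', k'⟩, hi'⟩ (rfl : k = k') hbot htop
  by_cases h : itemTop (a, c, k) = ⊥
  · exact h.trans_le bot_le
  · obtain ⟨hac, hk⟩ := hi.spans_of_itemTop_ne_bot h
    obtain ⟨hac', hk'⟩ := hi'.spans_of_itemTop_ne_bot htop
    dsimp only
    rw [hk.itemTop_eq, hk'.itemTop_eq]
    exact WithBot.coe_le_coe.2 (hS.xAt_succ_le hac hac' hk hk' hbot)

theorem IsPlanarSystem.eq_of_itemBot_eq_of_itemTop_eq {S : Pt → Pt → Prop} (hS : IsPlanarSystem S)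
    {a c a' c' : Pt} {k : ℤ} (hac : S a c) (hac' : S a' c') (hk : Spans a c k)
    (hk' : Spans a' c' k) (hbot : itemBot (a, c, k) = itemBot (a', c', k))
    (htop : itemTop (a, c, k) = itemTop (a', c', k)) : a = a' ∧ c = c' := by
  rw [hk.itemTop_eq, hk'.itemTop_eq, WithBot.coe_inj] at htop
  refine hS.eq_of_xAt_eq hac hac' hk hk' (r := 1 / 2) (by norm_num) ?_
  rw [xAt_add a c, xAt_add a' c', htop, show xAt a c k = xAt a' c' k from hbot]

theorem IsColumn.exists_item {S : Pt → Pt → Prop} {X : Pt → Pt → ℤ → ℤ} {k : ℤ} {x : ℝ} {ξ : ℤ}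
    (h : IsColumn S X k x ξ) :
    ∃ i, IsItem S i ∧ X i.1 i.2.1 i.2.2 = ξ ∧ MeetsRowAt itemLayer itemBot itemTop k i x := by
  cases h with
  | @point p hp hk => exact ⟨(p, p, k), .inl ⟨rfl, hp, hk⟩, rfl, .inl ⟨rfl, xAt_self p k⟩⟩
  | @above a c hac hk => exact ⟨(a, c, k), .inr ⟨hac, hk⟩, rfl, .inl ⟨rfl, rfl⟩⟩
  | @below a c hac hk =>
    refine ⟨(a, c, k - 1), .inr ⟨hac, hk⟩, rfl, .inr ⟨sub_add_cancel k 1, ?_⟩⟩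
    rw [hk.itemTop_eq]
    push_cast
    rw [sub_add_cancel]

theorem IsPlanarSystem.exists_isColumnAssignment {S : Pt → Pt → Prop} (hS : IsPlanarSystem S) :
    ∃ X, IsColumnAssignment S X := by
  have : Finite {i // IsItem S i} := hS.finite_isItem
  obtain ⟨Y, Y_lt, Y_inj⟩ := hS.layersNoncrossing.exists_columns
  let X (a c : Pt) (k : ℤ) : ℤ := Function.extend Subtype.val Y 0 (a, c, k)
  have X_eq : ∀ i (hi : IsItem S i), X i.1 i.2.1 i.2.2 = Y ⟨i, hi⟩ := fun i hi =>
    Subtype.val_injective.extend_apply Y 0 ⟨i, hi⟩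
  refine ⟨X, (finite_range Y).subset ?_, fun {k x x' ξ ξ'} h h' hlt => ?_,
    fun {a c a' c' k} hac hac' hk hk' heq => ?_⟩
  · rintro ξ ⟨k, x, h⟩
    obtain ⟨i, hi, rfl, -⟩ := h.exists_item
    exact ⟨⟨i, hi⟩, (X_eq i hi).symm⟩
  · obtain ⟨i, hi, hξ, hrow⟩ := h.exists_item
    obtain ⟨i', hi', hξ', hrow'⟩ := h'.exists_item
    rw [← hξ, ← hξ', X_eq i hi, X_eq i' hi']
    exact Y_lt (a := ⟨i, hi⟩) (a' := ⟨i', hi'⟩) hrow hrow' hlt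
  · have hi : IsItem S (a, c, k) := .inr ⟨hac, hk⟩
    have hi' : IsItem S (a', c', k) := .inr ⟨hac', hk'⟩
    rw [X_eq _ hi, X_eq _ hi'] at heq
    obtain ⟨hbot, htop⟩ := Y_inj (a := ⟨_, hi⟩) (a' := ⟨_, hi'⟩) rfl heq
    exact hS.eq_of_itemBot_eq_of_itemTop_eq hac hac' hk hk' hbot htop

/-! ### Corridors and staircases -/

/-- The columns that row `k` assigns to the points of the segment `a c`. -/
def rowColumns (S : Pt → Pt → Prop) (X : Pt → Pt → ℤ → ℤ) (a c : Pt) (k : ℤ) : Set ℤ :=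
  {ξ | ∃ x : ℝ, (x, (k : ℝ)) ∈ segment ℝ a c ∧ IsColumn S X k x ξ}

/-- The region reserved for the segment `a c`: on every row everything between two of its columns,
and its column in every strip between two rows. The corridor of a degenerate segment `p p` is the
box of the point `p`. -/
def corridor (S : Pt → Pt → Prop) (X : Pt → Pt → ℤ → ℤ) (a c : Pt) : Set Pt :=
  {z | ∃ k : ℤ, z.2 = k ∧ ∃ ξ ∈ rowColumns S X a c k, ∃ ξ' ∈ rowColumns S X a c k,
    z.1 ∈ Icc (ξ : ℝ) ξ'} ∪
  {z | ∃ k : ℤ, z.2 ∈ Ioo (k : ℝ) (k + 1) ∧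
    ((Spans a c k ∧ z.1 = X a c k) ∨ (Spans c a k ∧ z.1 = X c a k))}

section Corridor

variable {S : Pt → Pt → Prop} {X : Pt → Pt → ℤ → ℤ} {a c a' c' p z : Pt} {k : ℤ}

theorem rowColumns_comm (a c : Pt) (k : ℤ) : rowColumns S X a c k = rowColumns S X c a k := by
  simp only [rowColumns, segment_symm ℝ a c]

theorem corridor_comm (a c : Pt) : corridor S X a c = corridor S X c a := by
  simp only [corridor, rowColumns_comm a c, or_comm]

theorem snd_mem_uIcc_of_mem_segment (h : z ∈ segment ℝ a c) : z.2 ∈ uIcc a.2 c.2 := by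
  rw [← segment_eq_uIcc]
  exact (Prod.segment_subset a c h).2

theorem snd_mem_uIcc_of_mem_corridor (h : z ∈ corridor S X a c) : z.2 ∈ uIcc a.2 c.2 := by
  rcases h with ⟨k, hk, ξ, ⟨x, hx, -⟩, -⟩ | ⟨k, hk, h | h⟩
  · exact hk ▸ snd_mem_uIcc_of_mem_segment hx
  · exact mem_uIcc_of_le (h.1.1.trans hk.1.le) (hk.2.le.trans h.1.2)
  · exact mem_uIcc_of_ge (h.1.1.trans hk.1.le) (hk.2.le.trans h.1.2)

theorem mem_corridor_of_int_row (hz : z.2 = k) (h : z ∈ corridor S X a c) :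
    ∃ ξ ∈ rowColumns S X a c k, ∃ ξ' ∈ rowColumns S X a c k, z.1 ∈ Icc (ξ : ℝ) ξ' := by
  rcases h with ⟨j, hj, h⟩ | ⟨j, hj, -⟩
  · rwa [show k = j by exact_mod_cast hz.symm.trans hj]
  · rw [hz] at hj
    have h₁ : j < k := by exact_mod_cast hj.1
    have h₂ : k < j + 1 := by exact_mod_cast hj.2
    lia

theorem mem_rowColumns_self (hp : p.2 = k) {ξ : ℤ} :
    ξ ∈ rowColumns S X p p k ↔ IsColumn S X k p.1 ξ := by
  simp only [rowColumns, segment_same, mem_singleton_iff, Prod.ext_iff, hp, and_true, mem_ofPred_eq,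
    exists_eq_left]

theorem mem_corridor_self (hp : p.2 = k) : z ∈ corridor S X p p ↔
    z.2 = k ∧ ∃ ξ ξ', IsColumn S X k p.1 ξ ∧ IsColumn S X k p.1 ξ' ∧ z.1 ∈ Icc (ξ : ℝ) ξ' := by
  constructor
  · intro h
    have hz : z.2 = k := by simpa [hp] using snd_mem_uIcc_of_mem_corridor h
    obtain ⟨ξ, hξ, ξ', hξ', h⟩ := mem_corridor_of_int_row hz h
    exact ⟨hz, ξ, ξ', (mem_rowColumns_self hp).1 hξ, (mem_rowColumns_self hp).1 hξ', h⟩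
  · rintro ⟨hz, ξ, ξ', hξ, hξ', h⟩
    exact .inl ⟨k, hz, ξ, (mem_rowColumns_self hp).2 hξ, ξ', (mem_rowColumns_self hp).2 hξ', h⟩

end Corridor

namespace IsColumnAssignment

variable {S : Pt → Pt → Prop} {X : Pt → Pt → ℤ → ℤ} (hX : IsColumnAssignment S X)
include hX

theorem le_of_le {k ξ ξ' : ℤ} {x x' t : ℝ} (h : IsColumn S X k x ξ) (h' : IsColumn S X k x' ξ')
    (ht : ξ ≤ t) (ht' : t ≤ ξ') : x ≤ x' :=
  not_lt.1 fun hlt => (ht.trans ht').not_gt (Int.cast_lt.2 (hX.lt h' h hlt))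

theorem corridor_lt (hS : IsPlanarSystem S) {p q z z' : Pt} (hp : S p p) (hpq : p.2 = q.2)
    (hlt : p.1 < q.1) (hz : z ∈ corridor S X p p) (hz' : z' ∈ corridor S X q q) : z.1 < z'.1 := by
  obtain ⟨k, hk⟩ := hS.snd_int hp
  obtain ⟨-, ξ, ξ', -, hξ', h⟩ := (mem_corridor_self hk).1 hz
  obtain ⟨-, η, η', hη, -, h'⟩ := (mem_corridor_self (hpq ▸ hk)).1 hz'
  exact h.2.trans_lt ((Int.cast_lt.2 (hX.lt hξ' hη hlt)).trans_le h'.1)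

theorem exists_corridor_self_eq (hS : IsPlanarSystem S) {p : Pt} (hp : S p p) :
    ∃ l r : ℤ, l ≤ r ∧ corridor S X p p = Icc (l : ℝ) r ×ˢ {p.2} := by
  obtain ⟨k, hk⟩ := hS.snd_int hp
  have hfin : {ξ | IsColumn S X k p.1 ξ}.Finite := hX.finite.subset fun ξ h => ⟨k, p.1, h⟩
  have hne : {ξ | IsColumn S X k p.1 ξ}.Nonempty := ⟨_, .point hp hk⟩
  obtain ⟨l, hl, hmin⟩ := exists_min_image _ id hfin hne
  obtain ⟨r, hr, hmax⟩ := exists_max_image _ id hfin hne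
  refine ⟨l, r, hmin r hr, Set.ext fun z => ?_⟩
  rw [mem_corridor_self hk, mem_prod, mem_singleton_iff, hk, and_comm]
  refine and_congr_left fun _ => ⟨fun ⟨ξ, ξ', hξ, hξ', h⟩ => ?_, fun h => ⟨l, r, hl, hr, h⟩⟩
  exact ⟨(Int.cast_le.2 (hmin ξ hξ)).trans h.1, h.2.trans (Int.cast_le.2 (hmax ξ' hξ'))⟩

theorem eq_of_strip (hS : IsPlanarSystem S) {a c a' c' : Pt} {k : ℤ} {t : ℝ} (hac : S a c)
    (hac' : S a' c')
    (h : (Spans a c k ∧ t = X a c k) ∨ (Spans c a k ∧ t = X c a k))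
    (h' : (Spans a' c' k ∧ t = X a' c' k) ∨ (Spans c' a' k ∧ t = X c' a' k)) :
    s(a, c) = s(a', c') := by
  have key : ∀ {a c a' c'}, S a c → S a' c' → Spans a c k ∧ t = X a c k →
      Spans a' c' k ∧ t = X a' c' k → s(a, c) = s(a', c') := fun hac hac' h h' =>
    Sym2.eq_iff.2 (.inl (hX.inj hac hac' h.1 h'.1 (by exact_mod_cast h.2.symm.trans h'.2)))
  rcases h with h | h <;> rcases h' with h' | h'
  · exact key hac hac' h h'
  · exact (key hac (hS.symm hac') h h').trans Sym2.eq_swap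
  · exact Sym2.eq_swap.trans (key (hS.symm hac) hac' h h')
  · exact Sym2.eq_swap.trans ((key (hS.symm hac) (hS.symm hac') h h').trans Sym2.eq_swap)

end IsColumnAssignment

theorem IsPlanarSystem.max_eq_min_of_overlap {S : Pt → Pt → Prop} (hS : IsPlanarSystem S)
    {a c a' c' : Pt} (hac : S a c) (hac' : S a' c') (hne : s(a, c) ≠ s(a', c'))
    {y x₁ x₂ x₁' x₂' : ℝ}
    (h₁ : (x₁, y) ∈ segment ℝ a c) (h₂ : (x₂, y) ∈ segment ℝ a c)
    (h₁' : (x₁', y) ∈ segment ℝ a' c') (h₂' : (x₂', y) ∈ segment ℝ a' c')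
    (hx : x₁ ≤ x₂) (hx' : x₁' ≤ x₂') (hlt : x₁ ≤ x₂') (hlt' : x₁' ≤ x₂) :
    max x₁ x₁' = min x₂ x₂' ∧ ((max x₁ x₁', y) = a ∨ (max x₁ x₁', y) = c) ∧
      ((max x₁ x₁', y) = a' ∨ (max x₁ x₁', y) = c') := by
  have row_subset : ∀ {a c : Pt} {x₁ x₂ x : ℝ}, (x₁, y) ∈ segment ℝ a c → (x₂, y) ∈ segment ℝ a c →
      x₁ ≤ x → x ≤ x₂ → (x, y) ∈ segment ℝ a c := fun {a c _ _ _} h₁ h₂ hx hx' =>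
    (convex_segment a c).segment_subset h₁ h₂
      (mem_segment_horizontal.2 ⟨rfl, mem_uIcc_of_le hx hx'⟩)
  have ends : ∀ x, max x₁ x₁' ≤ x → x ≤ min x₂ x₂' →
      ((x, y) = a ∨ (x, y) = c) ∧ ((x, y) = a' ∨ (x, y) = c') := fun x hx hx' =>
    Or.resolve_left (hS.eq_or_mem_ends hac hac'
      (row_subset h₁ h₂ ((le_max_left _ _).trans hx) (hx'.trans (min_le_left _ _)))
      (row_subset h₁' h₂' ((le_max_right _ _).trans hx) (hx'.trans (min_le_right _ _)))) hne
  have hle : max x₁ x₁' ≤ min x₂ x₂' := max_le (le_min hx hlt) (le_min hlt' hx')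
  have hl := ends _ le_rfl hle
  have hr := ends _ hle le_rfl
  refine ⟨by_contra fun h => hne ?_, hl⟩
  have : (max x₁ x₁', y) ≠ (min x₂ x₂', y) := fun h' => h (congrArg Prod.fst h')
  rw [Sym2.eq_iff]
  grind

/-- On a row, the columns keep the order of the positions. So if two corridors overlap there, then
so do the two segments, and this in a single point, a common end. -/
theorem IsColumnAssignment.exists_common_end {S : Pt → Pt → Prop} {X : Pt → Pt → ℤ → ℤ}
    (hX : IsColumnAssignment S X) (hS : IsPlanarSystem S) {a c a' c' z : Pt} (hac : S a c)
    (hac' : S a' c') (hne : s(a, c) ≠ s(a', c')) (hz : z ∈ corridor S X a c)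
    (hz' : z ∈ corridor S X a' c') :
    ∃ w, (w = a ∨ w = c) ∧ (w = a' ∨ w = c') ∧ z ∈ corridor S X w w := by
  by_cases hrow : ∃ k : ℤ, z.2 = k
  · obtain ⟨k, hk⟩ := hrow
    obtain ⟨ξ₁, ⟨x₁, h₁, hξ₁⟩, ξ₂, ⟨x₂, h₂, hξ₂⟩, ht₁, ht₂⟩ := mem_corridor_of_int_row hk hz
    obtain ⟨ξ₁', ⟨x₁', h₁', hξ₁'⟩, ξ₂', ⟨x₂', h₂', hξ₂'⟩, ht₁', ht₂'⟩ :=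
      mem_corridor_of_int_row hk hz'
    obtain ⟨hw, hwac, hwac'⟩ := hS.max_eq_min_of_overlap hac hac' hne h₁ h₂ h₁' h₂'
      (hX.le_of_le hξ₁ hξ₂ ht₁ ht₂) (hX.le_of_le hξ₁' hξ₂' ht₁' ht₂')
      (hX.le_of_le hξ₁ hξ₂' ht₁ ht₂') (hX.le_of_le hξ₁' hξ₂ ht₁' ht₂)
    refine ⟨_, hwac, hwac', (mem_corridor_self rfl).2 ⟨hk, ?_⟩⟩
    have left : ∃ ξ, IsColumn S X k (max x₁ x₁') ξ ∧ ξ ≤ z.1 := by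
      rcases max_choice x₁ x₁' with h | h <;> rw [h]
      exacts [⟨ξ₁, hξ₁, ht₁⟩, ⟨ξ₁', hξ₁', ht₁'⟩]
    have right : ∃ ξ, IsColumn S X k (max x₁ x₁') ξ ∧ z.1 ≤ ξ := by
      rcases min_choice x₂ x₂' with h | h <;> rw [hw, h]
      exacts [⟨ξ₂, hξ₂, ht₂⟩, ⟨ξ₂', hξ₂', ht₂'⟩]
    obtain ⟨ξ, hξ, hle⟩ := left
    obtain ⟨ξ', hξ', hge⟩ := right
    exact ⟨ξ, ξ', hξ, hξ', hle, hge⟩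
  · rcases hz with ⟨k, hk, -⟩ | ⟨k, hk, h⟩
    · exact absurd ⟨k, hk⟩ hrow
    rcases hz' with ⟨k', hk', -⟩ | ⟨k', hk', h'⟩
    · exact absurd ⟨k', hk'⟩ hrow
    obtain rfl : k = k' := by
      rw [← Int.floor_eq_iff.2 ⟨hk.1.le, hk.2⟩, Int.floor_eq_iff.2 ⟨hk'.1.le, hk'.2⟩]
    exact absurd (hX.eq_of_strip hS hac hac' h h') hne

/-- The staircase between the rows `k₀` and `k₁` that runs in column `f k` from row `k` to row
`k + 1` and changes its column on the rows between `k₀` and `k₁`. -/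
def staircase (f : ℤ → ℤ) (k₀ k₁ : ℤ) : Set Pt :=
  (⋃ k ∈ Ico k₀ k₁, segment ℝ ((f k : ℝ), (k : ℝ)) ((f k : ℝ), ((k + 1 : ℤ) : ℝ))) ∪
    ⋃ k ∈ Ioo k₀ k₁, segment ℝ ((f (k - 1) : ℝ), (k : ℝ)) ((f k : ℝ), (k : ℝ))

section Staircase

variable (f : ℤ → ℤ) {k₀ k₁ : ℤ}

theorem mem_staircase {z : Pt} : z ∈ staircase f k₀ k₁ ↔
    (∃ k ∈ Ico k₀ k₁, z.1 = f k ∧ z.2 ∈ Icc (k : ℝ) (k + 1)) ∨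
      ∃ k ∈ Ioo k₀ k₁, z.2 = k ∧ z.1 ∈ uIcc (f (k - 1) : ℝ) (f k) := by
  simp only [staircase, mem_union, mem_iUnion₂, exists_prop, mem_segment_vertical,
    mem_segment_horizontal, Int.cast_add, Int.cast_one, le_add_iff_nonneg_right, zero_le_one,
    uIcc_of_le]

theorem staircase_succ_self (k : ℤ) : staircase f k (k + 1) =
    segment ℝ ((f k : ℝ), (k : ℝ)) ((f k : ℝ), ((k + 1 : ℤ) : ℝ)) := by
  have hIco : Ico k (k + 1) = {k} := by ext; grind
  have hIoo : Ioo k (k + 1) = ∅ := by ext; grind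
  simp [staircase, hIco, hIoo]

theorem staircase_succ (h : k₀ < k₁) : staircase f k₀ (k₁ + 1) = staircase f k₀ k₁ ∪
    segment ℝ ((f (k₁ - 1) : ℝ), (k₁ : ℝ)) ((f k₁ : ℝ), (k₁ : ℝ)) ∪
      segment ℝ ((f k₁ : ℝ), (k₁ : ℝ)) ((f k₁ : ℝ), ((k₁ + 1 : ℤ) : ℝ)) := by
  have hIco : Ico k₀ (k₁ + 1) = insert k₁ (Ico k₀ k₁) := by ext; grind
  have hIoo : Ioo k₀ (k₁ + 1) = insert k₁ (Ioo k₀ k₁) := by ext; grind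
  rw [staircase, hIco, hIoo, biUnion_insert, biUnion_insert, staircase]
  ac_rfl

theorem staircase_rows {z : Pt} (hz : z ∈ staircase f k₀ k₁) :
    z.2 ∈ Icc (k₀ : ℝ) k₁ ∧ (z.2 = k₀ → z.1 = f k₀) ∧ (z.2 = k₁ → z.1 = f (k₁ - 1)) := by
  rcases (mem_staircase f).1 hz with ⟨k, hk, hz₁, hz₂⟩ | ⟨k, hk, hz₂, -⟩
  · have h₀ : (k₀ : ℝ) ≤ k := Int.cast_le.2 hk.1
    have h₁ : (k : ℝ) + 1 ≤ k₁ := by exact_mod_cast hk.2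
    refine ⟨⟨h₀.trans hz₂.1, hz₂.2.trans h₁⟩, fun h => ?_, fun h => ?_⟩
    · rw [hz₁, show k = k₀ by exact_mod_cast (le_antisymm (h ▸ hz₂.1) h₀)]
    · rw [hz₁, show k = k₁ - 1 by
        exact_mod_cast (by push_cast; linarith [hz₂.2] : (k : ℝ) = (k₁ - 1 : ℤ))]
  · have h₀ : (k₀ : ℝ) < k := Int.cast_lt.2 hk.1
    have h₁ : (k : ℝ) < k₁ := Int.cast_lt.2 hk.2
    rw [hz₂]
    exact ⟨⟨h₀.le, h₁.le⟩, fun h => absurd h h₀.ne', fun h => absurd h h₁.ne⟩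

theorem isIntPt_intCast (m n : ℤ) : IsIntPt ((m : ℝ), (n : ℝ)) := ⟨⟨m, rfl⟩, ⟨n, rfl⟩⟩

theorem hasOrthPath_staircase (h : k₀ < k₁) :
    HasOrthPath ((f k₀ : ℝ), (k₀ : ℝ)) ((f (k₁ - 1) : ℝ), (k₁ : ℝ)) (staircase f k₀ k₁)
      True False := by
  have vertical : ∀ k, HasOrthPath ((f k : ℝ), (k : ℝ)) ((f k : ℝ), ((k + 1 : ℤ) : ℝ))
      (segment ℝ ((f k : ℝ), (k : ℝ)) ((f k : ℝ), ((k + 1 : ℤ) : ℝ))) True False := fun k =>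
    (HasOrthPath.of_axisParallel (isIntPt_intCast (f k) k) (isIntPt_intCast (f k) (k + 1))
      (.inl rfl)).mono (fun _ => by simp) False.elim
  induction k₁, Order.add_one_le_of_lt h using Int.leInduction with
  | base =>
    rw [staircase_succ_self, add_sub_cancel_right]
    exact vertical k₀
  | succ k₁ hk ih =>
    have hk : k₀ < k₁ := by lia
    have horizontal : HasOrthPath ((f (k₁ - 1) : ℝ), (k₁ : ℝ)) ((f k₁ : ℝ), (k₁ : ℝ))
        (segment ℝ ((f (k₁ - 1) : ℝ), (k₁ : ℝ)) ((f k₁ : ℝ), (k₁ : ℝ))) True False :=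
      (HasOrthPath.of_axisParallel (isIntPt_intCast (f (k₁ - 1)) k₁) (isIntPt_intCast (f k₁) k₁)
        (.inr rfl)).mono (fun _ => le_rfl) False.elim
    rw [staircase_succ f hk, add_sub_cancel_right]
    refine ((ih hk).trans horizontal ?_).trans (vertical k₁) ?_
    · rintro z ⟨hz, hz'⟩
      have hz' := (mem_segment_horizontal.1 hz').1
      exact Prod.ext ((staircase_rows f hz).2.2 hz') hz'
    · rintro z ⟨hz, hz'⟩
      obtain ⟨hz₁, hz₂⟩ := mem_segment_vertical.1 hz'
      rw [uIcc_of_le (by simp)] at hz₂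
      refine Prod.ext hz₁ (le_antisymm ?_ hz₂.1)
      exact hz.elim (fun hz => (staircase_rows f hz).1.2) fun hz =>
        (mem_segment_horizontal.1 hz).1.le

end Staircase

/-- `T` is a connection through the region `R` from a point `p` of the box `A` to a point `q` of the
box `B`, and it does not meet the two boxes in any other point. -/
structure Joins (A B R : Set Pt) (p q : Pt) (T : Set Pt) : Prop where
  start_mem : p ∈ A
  end_mem : q ∈ B
  subset : T ⊆ R
  inter_start : T ∩ A ⊆ {p}
  inter_end : T ∩ B ⊆ {q}

theorem Joins.symm {A B R T : Set Pt} {p q : Pt} (h : Joins A B R p q T) : Joins B A R q p T :=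
  ⟨h.end_mem, h.start_mem, h.subset, h.inter_end, h.inter_start⟩

/-- The boxes `A` and `B` can be connected through the region `R` by an axis-parallel path, which is
ascending if `up` holds and descending if `down` holds. -/
def HasLink (A B R : Set Pt) (up down : Prop) : Prop :=
  ∃ p q T, Joins A B R p q T ∧ HasOrthPath p q T up down

theorem HasLink.symm {A B R : Set Pt} {up down : Prop} (h : HasLink A B R up down) :
    HasLink B A R down up := by
  obtain ⟨p, q, T, hT, h⟩ := h
  exact ⟨q, p, T, hT.symm, h.symm⟩

/-- Regions `C a c` for the segments of a planar system, among them the boxes `C p p` of its points,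
in which the segments can be replaced by axis-parallel paths independently of each other. -/
structure IsRouting (S : Pt → Pt → Prop) (C : Pt → Pt → Set Pt) : Prop where
  comm : ∀ a c, C a c = C c a
  exists_common_end : ∀ {a c a' c' z}, S a c → S a' c' → s(a, c) ≠ s(a', c') → z ∈ C a c →
    z ∈ C a' c' → ∃ w, (w = a ∨ w = c) ∧ (w = a' ∨ w = c') ∧ z ∈ C w w
  box : ∀ {p}, S p p → ∃ l r : ℤ, l ≤ r ∧ C p p = Icc (l : ℝ) r ×ˢ {p.2}
  lt : ∀ {p q z z'}, S p p → p.2 = q.2 → p.1 < q.1 → z ∈ C p p → z' ∈ C q q → z.1 < z'.1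
  snd_mem : ∀ {a c z}, z ∈ C a c → z.2 ∈ uIcc a.2 c.2
  link : ∀ {a c}, S a c → a ≠ c → HasLink (C a a) (C c c) (C a c) (a.2 ≤ c.2) (c.2 ≤ a.2)

section

variable {S : Pt → Pt → Prop} {X : Pt → Pt → ℤ → ℤ} {a c : Pt} {k k₀ k₁ : ℤ}

theorem above_mem_rowColumns (hac : S a c) (hk : Spans a c k) :
    X a c k ∈ rowColumns S X a c k :=
  ⟨_, xAt_mem_segment hk.lt ⟨hk.1, by linarith [hk.2]⟩, .above hac hk⟩

theorem below_mem_rowColumns (hac : S a c) (hk : Spans a c (k - 1)) :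
    X a c (k - 1) ∈ rowColumns S X a c k := by
  have h := hk
  simp only [Spans, Int.cast_sub, Int.cast_one, sub_add_cancel] at h
  exact ⟨_, xAt_mem_segment hk.lt ⟨by linarith [h.1], h.2⟩, .below hac hk⟩

theorem staircase_subset_corridor (hac : S a c) (ha : a.2 = k₀) (hc : c.2 = k₁) :
    staircase (X a c) k₀ k₁ ⊆ corridor S X a c := by
  have spans : ∀ {k}, k₀ ≤ k → k < k₁ → Spans a c k := fun h₀ h₁ =>
    ⟨by rw [ha]; exact_mod_cast h₀, by rw [hc]; exact_mod_cast h₁⟩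
  intro z hz
  rcases (mem_staircase _).1 hz with ⟨k, hk, hz₁, hz₂⟩ | ⟨k, hk, hz₂, hz₁⟩
  · have hk := spans hk.1 hk.2
    rcases hz₂.1.eq_or_lt with h | h
    · have hξ := above_mem_rowColumns (X := X) hac hk
      exact .inl ⟨k, h.symm, _, hξ, _, hξ, hz₁.ge, hz₁.le⟩
    rcases hz₂.2.eq_or_lt with h' | h'
    · have hξ := below_mem_rowColumns (X := X) (k := k + 1) hac (by rwa [add_sub_cancel_right])
      rw [add_sub_cancel_right] at hξ
      exact .inl ⟨k + 1, by exact_mod_cast h', _, hξ, _, hξ, hz₁.ge, hz₁.le⟩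
    · exact .inr ⟨k, ⟨h, h'⟩, .inl ⟨hk, hz₁⟩⟩
  · have hbelow := below_mem_rowColumns (X := X) hac (spans (k := k - 1) (by grind) (by grind))
    have habove := above_mem_rowColumns (X := X) hac (spans hk.1.le hk.2)
    rcases mem_uIcc.1 hz₁ with h | h
    · exact .inl ⟨k, hz₂, _, hbelow, _, habove, h⟩
    · exact .inl ⟨k, hz₂, _, habove, _, hbelow, h⟩

theorem IsPlanarSystem.hasLink_corridor_of_snd_lt (hS : IsPlanarSystem S) (hac : S a c)
    (h : a.2 < c.2) : HasLink (corridor S X a a) (corridor S X c c) (corridor S X a c)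
      (a.2 ≤ c.2) (c.2 ≤ a.2) := by
  obtain ⟨k₀, ha⟩ := hS.snd_int (hS.left hac)
  obtain ⟨k₁, hc⟩ := hS.snd_int (hS.right hac)
  have hk : k₀ < k₁ := by rw [ha, hc] at h; exact_mod_cast h
  have hk' : (k₀ : ℝ) + 1 ≤ k₁ := by exact_mod_cast hk
  refine ⟨((X a c k₀ : ℝ), (k₀ : ℝ)), ((X a c (k₁ - 1) : ℝ), (k₁ : ℝ)),
    staircase (X a c) k₀ k₁, ⟨?_, ?_, staircase_subset_corridor hac ha hc, ?_, ?_⟩,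
    (hasOrthPath_staircase (X a c) hk).mono (fun _ => trivial) h.not_ge⟩
  · have hcol : IsColumn S X k₀ a.1 (X a c k₀) := by
      rw [← xAt_left a c, ha]
      exact .above hac ⟨ha.le, hc ▸ hk'⟩
    exact (mem_corridor_self ha).2 ⟨rfl, _, _, hcol, hcol, le_rfl, le_rfl⟩
  · have hcol : IsColumn S X k₁ c.1 (X a c (k₁ - 1)) := by
      rw [← xAt_right h.ne, hc]
      exact .below hac ⟨by push_cast; linarith, by push_cast; linarith⟩
    exact (mem_corridor_self hc).2 ⟨rfl, _, _, hcol, hcol, le_rfl, le_rfl⟩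
  · rintro z ⟨hz, hza⟩
    have hza := ((mem_corridor_self ha).1 hza).1
    exact Prod.ext ((staircase_rows _ hz).2.1 hza) hza
  · rintro z ⟨hz, hzc⟩
    have hzc := ((mem_corridor_self hc).1 hzc).1
    exact Prod.ext ((staircase_rows _ hz).2.2 hzc) hzc

theorem IsPlanarSystem.hasLink_corridor_of_snd_eq (hS : IsPlanarSystem S)
    (hX : IsColumnAssignment S X) (hac : S a c) (h : a.2 = c.2) (hlt : a.1 < c.1) :
    HasLink (corridor S X a a) (corridor S X c c) (corridor S X a c)
      (a.2 ≤ c.2) (c.2 ≤ a.2) := by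
  obtain ⟨k, ha⟩ := hS.snd_int (hS.left hac)
  obtain ⟨l, r, hlr, hbox⟩ := hX.exists_corridor_self_eq hS (hS.left hac)
  obtain ⟨l', r', hlr', hbox'⟩ := hX.exists_corridor_self_eq hS (hS.right hac)
  have hp : ((r : ℝ), (k : ℝ)) ∈ corridor S X a a := hbox ▸ ⟨⟨Int.cast_le.2 hlr, le_rfl⟩, ha.symm⟩
  have hq : ((l' : ℝ), (k : ℝ)) ∈ corridor S X c c :=
    hbox' ▸ ⟨⟨le_rfl, Int.cast_le.2 hlr'⟩, ha.symm.trans h⟩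
  have hrl : (r : ℝ) < l' := hX.corridor_lt hS (hS.left hac) h hlt hp hq
  have mem_iff : ∀ {z}, z ∈ segment ℝ ((r : ℝ), (k : ℝ)) ((l' : ℝ), (k : ℝ)) ↔
      z.2 = k ∧ z.1 ∈ Icc (r : ℝ) l' := by simp [mem_segment_horizontal, uIcc_of_le hrl.le]
  refine ⟨_, _, _, ⟨hp, hq, fun z hz => ?_, ?_, ?_⟩, (HasOrthPath.of_axisParallel
    (isIntPt_intCast r k) (isIntPt_intCast l' k) (.inr rfl)).mono (fun _ => le_rfl) fun _ => le_rfl⟩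
  · obtain ⟨-, ξ, -, hξ, -, hle, -⟩ := (mem_corridor_self ha).1 hp
    obtain ⟨-, -, ξ', -, hξ', -, hge⟩ := (mem_corridor_self (h ▸ ha)).1 hq
    obtain ⟨hz₂, hz₁⟩ := mem_iff.1 hz
    refine .inl ⟨k, hz₂, ξ, ⟨a.1, ?_, hξ⟩, ξ', ⟨c.1, ?_, hξ'⟩, hle.trans hz₁.1, hz₁.2.trans hge⟩
    · exact ha ▸ left_mem_segment ℝ a c
    · exact ha ▸ h ▸ right_mem_segment ℝ a c
  · rintro z ⟨hz, hza⟩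
    obtain ⟨hz₂, hz₁⟩ := mem_iff.1 hz
    rw [hbox] at hza
    exact Prod.ext (le_antisymm hza.1.2 hz₁.1) hz₂
  · rintro z ⟨hz, hzc⟩
    obtain ⟨hz₂, hz₁⟩ := mem_iff.1 hz
    rw [hbox'] at hzc
    exact Prod.ext (le_antisymm hz₁.2 hzc.1.1) hz₂

theorem IsPlanarSystem.hasLink_corridor (hS : IsPlanarSystem S) (hX : IsColumnAssignment S X)
    (hac : S a c) (hne : a ≠ c) : HasLink (corridor S X a a) (corridor S X c c) (corridor S X a c)
      (a.2 ≤ c.2) (c.2 ≤ a.2) := by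
  rcases lt_trichotomy a.2 c.2 with h | h | h
  · exact hS.hasLink_corridor_of_snd_lt hac h
  · rcases lt_or_gt_of_ne fun h' => hne (Prod.ext h' h) with h' | h'
    · exact hS.hasLink_corridor_of_snd_eq hX hac h h'
    · exact corridor_comm c a ▸ (hS.hasLink_corridor_of_snd_eq hX (hS.symm hac) h.symm h').symm
  · exact corridor_comm c a ▸ (hS.hasLink_corridor_of_snd_lt (hS.symm hac) h).symm

theorem IsPlanarSystem.exists_isRouting (hS : IsPlanarSystem S) : ∃ C, IsRouting S C := by
  obtain ⟨X, hX⟩ := hS.exists_isColumnAssignment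
  exact ⟨corridor S X, {
    comm := corridor_comm
    exists_common_end := hX.exists_common_end hS
    box := hX.exists_corridor_self_eq hS
    lt := hX.corridor_lt hS
    snd_mem := snd_mem_uIcc_of_mem_corridor
    link := hS.hasLink_corridor hX }⟩

end

/-! ### Routing polygonal chains -/

section Joins

variable {A B D R R' T T' : Set Pt} {p q p' q' : Pt}

theorem Joins.mono (h : Joins A B R p q T) (hR : R ⊆ R') : Joins A B R' p q T :=
  ⟨h.start_mem, h.end_mem, h.subset.trans hR, h.inter_start, h.inter_end⟩

theorem Joins.trans (h : Joins A B R p q T) (h' : Joins B D R' p' q' T') (hB : Convex ℝ B)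
    (hAB : Disjoint A B) (hAR' : Disjoint A R') (hBD : Disjoint B D) (hRD : Disjoint R D) :
    Joins A D (R ∪ B ∪ R') p q' (T ∪ segment ℝ q p' ∪ T') := by
  have hseg : segment ℝ q p' ⊆ B := hB.segment_subset h.end_mem h'.start_mem
  refine ⟨h.start_mem, h'.end_mem,
    union_subset_union (union_subset_union h.subset hseg) h'.subset, ?_, ?_⟩
  · rintro z ⟨(hz | hz) | hz, hzA⟩
    · exact h.inter_start ⟨hz, hzA⟩
    · exact absurd (hseg hz) (disjoint_left.1 hAB hzA)
    · exact absurd (h'.subset hz) (disjoint_left.1 hAR' hzA)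
  · rintro z ⟨(hz | hz) | hz, hzD⟩
    · exact absurd hzD (disjoint_left.1 hRD (h.subset hz))
    · exact absurd hzD (disjoint_left.1 hBD (hseg hz))
    · exact h'.inter_end ⟨hz, hzD⟩

theorem HasOrthPath.trans_joins {up down : Prop} (hT : HasOrthPath p q T up down)
    (hT' : HasOrthPath p' q' T' up down) (h : Joins A B R p q T) (h' : Joins B D R' p' q' T')
    (hB : Convex ℝ B) (hrow : ∀ z ∈ B, ∀ z' ∈ B, z.2 = z'.2) (hRR' : R ∩ R' ⊆ B) :
    HasOrthPath p q' (T ∪ segment ℝ q p' ∪ T') up down := by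
  have hseg : segment ℝ q p' ⊆ B := hB.segment_subset h.end_mem h'.start_mem
  have hqp' : q.2 = p'.2 := hrow _ h.end_mem _ h'.start_mem
  have hq : HasOrthPath q p' (segment ℝ q p') up down :=
    (HasOrthPath.of_axisParallel hT.isIntPt_right hT'.isIntPt_left (.inr hqp')).mono
      (fun _ => hqp'.le) fun _ => hqp'.ge
  refine (hT.trans hq fun z hz => h.inter_end ⟨hz.1, hseg hz.2⟩).trans hT' ?_
  rintro z ⟨hz | hz, hz'⟩
  · exact h'.inter_start ⟨hz', hRR' ⟨h.subset hz, h'.subset hz'⟩⟩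
  · exact h'.inter_start ⟨hz', hseg hz⟩

end Joins

/-- The region that a routing reserves for a polygonal chain. -/
def chainRegion (C : Pt → Pt → Set Pt) (l : List Pt) : Set Pt :=
  {z | ∃ a c, IsPiece l a c ∧ z ∈ C a c}

theorem chainRegion_cons_cons (C : Pt → Pt → Set Pt) (a b : Pt) (l : List Pt) :
    chainRegion C (a :: b :: l) = C a a ∪ C a b ∪ chainRegion C (b :: l) := by
  ext z
  simp only [chainRegion, mem_ofPred_eq, isPiece_cons_cons, mem_union]
  grind

namespace IsRouting

variable {S : Pt → Pt → Prop} {C : Pt → Pt → Set Pt} {l : List Pt} {a b c z : Pt}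

theorem chainRegion_reverse (hC : IsRouting S C) (l : List Pt) :
    chainRegion C l.reverse = chainRegion C l := by
  ext z
  simp only [chainRegion, isPiece_reverse, mem_ofPred_eq]
  rw [exists_comm]
  simp only [hC.comm]

theorem convex_box (hC : IsRouting S C) (ha : S a a) : Convex ℝ (C a a) := by
  obtain ⟨l, r, -, h⟩ := hC.box ha
  exact h ▸ (convex_Icc _ _).prod (convex_singleton _)

theorem snd_eq (hC : IsRouting S C) (hz : z ∈ C a a) : z.2 = a.2 := by
  simpa using hC.snd_mem hz

theorem mem_of_mem_chainRegion (hC : IsRouting S C) (hl : ∀ x y, IsPiece l x y → S x y)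
    (hab : S a b) (ha : a ∉ l) (hz : z ∈ C a b) (hz' : z ∈ chainRegion C l) :
    b ∈ l ∧ z ∈ C b b := by
  obtain ⟨x, y, hxy, hz'⟩ := hz'
  have hx := hxy.mem
  have hne : s(a, b) ≠ s(x, y) := by
    rw [Ne, Sym2.eq_iff]
    grind
  obtain ⟨w, hw, hw', hzw⟩ := hC.exists_common_end hab (hl x y hxy) hne hz hz'
  grind

theorem disjoint_chainRegion (hC : IsRouting S C) (hl : ∀ x y, IsPiece l x y → S x y)
    (hab : S a b) (ha : a ∉ l) (hb : b ∉ l) : Disjoint (C a b) (chainRegion C l) :=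
  disjoint_left.2 fun _ hz hz' => hb (hC.mem_of_mem_chainRegion hl hab ha hz hz').1

theorem disjoint_box (hC : IsRouting S C) (hab : S a b) (hc : S c c) (ha : a ≠ c) (hb : b ≠ c) :
    Disjoint (C a b) (C c c) :=
  disjoint_left.2 fun _ hz hz' => by
    obtain ⟨w, hw, hw', -⟩ := hC.exists_common_end hab hc (by rw [Ne, Sym2.eq_iff]; grind) hz hz'
    grind

/-- The path through `C a b` and the path along the rest of the chain are concatenated inside the
box of `b`. -/
theorem joins_cons (hC : IsRouting S C) (hn : (a :: b :: l).Nodup)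
    (hl : ∀ x y, IsPiece (a :: b :: l) x y → S x y) (hc : c ∈ l) {p q p' q' : Pt} {T T' : Set Pt}
    (hT : Joins (C a a) (C b b) (C a b) p q T)
    (hT' : Joins (C b b) (C c c) (chainRegion C (b :: l)) p' q' T') :
    Joins (C a a) (C c c) (chainRegion C (a :: b :: l)) p q' (T ∪ segment ℝ q p' ∪ T') := by
  have hab : S a b := hl a b (by simp [isPiece_cons_cons])
  have hl' : ∀ x y, IsPiece (b :: l) x y → S x y := fun x y h =>
    hl x y (isPiece_cons_cons.2 (.inr (.inr h)))
  have hbox : ∀ x ∈ a :: b :: l, S x x := fun x hx => hl x x (.inl ⟨rfl, hx⟩)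
  have ha := (List.nodup_cons.1 hn).1
  have hac : a ≠ c := by grind
  have hbc : b ≠ c := by grind
  have hSa := hbox a (by grind)
  have hSb := hbox b (by grind)
  have hSc := hbox c (by grind)
  have hb : C b b ⊆ chainRegion C (b :: l) := fun z hz => ⟨b, b, .inl ⟨rfl, by simp⟩, hz⟩
  refine (hT.trans hT' (hC.convex_box hSb) (hC.disjoint_box hSa hSb (by grind) (by grind))
    (hC.disjoint_chainRegion hl' hSa ha ha) (hC.disjoint_box hSb hSc hbc hbc)
    (hC.disjoint_box hab hSc hac hbc)).mono ?_
  rw [chainRegion_cons_cons C a b]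
  exact union_subset (union_subset (subset_union_right.trans subset_union_left)
    (hb.trans subset_union_right)) subset_union_right

theorem exists_joins_chain (hC : IsRouting S C) (hn : (a :: b :: l).Nodup)
    (hl : ∀ x y, IsPiece (a :: b :: l) x y → S x y) (hc : (a :: b :: l).getLast? = some c) :
    ∃ p q T, Joins (C a a) (C c c) (chainRegion C (a :: b :: l)) p q T ∧
      HasOrthPath p q T ((a :: b :: l).IsChain fun x y => x.2 ≤ y.2)
        ((a :: b :: l).IsChain fun x y => y.2 ≤ x.2) ∧
      ∀ x ∈ a :: b :: l, (T ∩ C x x).Nonempty := by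
  have hab : S a b := hl a b (by simp [isPiece_cons_cons])
  induction l generalizing a b with
  | nil =>
    obtain ⟨p, q, T, hT, hpath⟩ := hC.link hab (by grind)
    obtain rfl : b = c := by simpa using hc
    refine ⟨p, q, T, hT.mono ?_, hpath.mono (by simp) (by simp), ?_⟩
    · rw [chainRegion_cons_cons]
      exact subset_union_right.trans subset_union_left
    · simp only [List.forall_mem_cons, List.not_mem_nil, false_imp_iff, implies_true, and_true]
      exact ⟨⟨p, hpath.left_mem, hT.start_mem⟩, ⟨q, hpath.right_mem, hT.end_mem⟩⟩
  | cons d l ih =>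
    obtain ⟨p, q, T, hT, hpath⟩ := hC.link hab (by grind)
    have hl' : ∀ x y, IsPiece (b :: d :: l) x y → S x y := fun x y h =>
      hl x y (isPiece_cons_cons.2 (.inr (.inr h)))
    obtain ⟨p', q', T', hT', hpath', hrows⟩ := ih hn.of_cons hl' (by simpa using hc)
      (hl' b d (by simp [isPiece_cons_cons]))
    have hcl : c ∈ d :: l := List.mem_of_getLast? (by simpa using hc)
    refine ⟨p, q', _, hC.joins_cons hn hl hcl hT hT',
      (hpath.mono ?_ ?_).trans_joins (hpath'.mono ?_ ?_) hT hT'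
        (hC.convex_box (hl' b b (.inl ⟨rfl, by simp⟩)))
        (fun z hz z' hz' => (hC.snd_eq hz).trans (hC.snd_eq hz').symm)
        fun z hz => (hC.mem_of_mem_chainRegion hl' hab (List.nodup_cons.1 hn).1 hz.1 hz.2).2, ?_⟩
    iterate 2 exact fun h => (List.isChain_cons_cons.1 h).1
    iterate 2 exact List.IsChain.tail
    · intro x hx
      rcases List.mem_cons.1 hx with rfl | hx
      · exact ⟨p, .inl (.inl hpath.left_mem), hT.start_mem⟩
      · exact (hrows x hx).mono (inter_subset_inter_left _ subset_union_right)

end IsRouting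

/-! ### Pieces of a drawing -/

namespace PolylineDrawing

variable {V : Type*} {G : SimpleGraph V} {D : PolylineDrawing G} {u v w x y : V} {a c z : Pt}

theorem chain_symm (D : PolylineDrawing G) (u v : V) : D.chain v u = (D.chain u v).reverse := by
  simp [chain, D.bends_symm u v]

theorem pos_mem_chain (D : PolylineDrawing G) (hw : w = u ∨ w = v) : D.pos w ∈ D.chain u v := by
  rcases hw with rfl | rfl <;> simp [chain]

theorem curve_eq_chainTrace (D : PolylineDrawing G) (u v : V) :
    D.curve u v = chainTrace (D.chain u v) :=
  chainSet_eq_chainTrace (by simp [chain])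

theorem mem_points_iff : z ∈ D.points ↔ z ∈ range D.pos ∨ ∃ u v, G.Adj u v ∧ z ∈ D.chain u v := by
  simp only [points, chain, mem_union, mem_iUnion, mem_ofPred_eq, List.mem_cons, List.mem_append,
    List.not_mem_nil, or_false, exists_prop]
  grind

theorem finite_points [Finite V] (D : PolylineDrawing G) : D.points.Finite :=
  (finite_range _).union (finite_iUnion fun _ => finite_iUnion fun _ => finite_iUnion fun _ =>
    List.finite_toSet _)

/-- The pieces of a drawing are the vertex points and the pieces of the edge curves. -/
def HasPiece (D : PolylineDrawing G) (a c : Pt) : Prop :=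
  (a = c ∧ a ∈ range D.pos) ∨ ∃ u v, G.Adj u v ∧ IsPiece (D.chain u v) a c

theorem hasPiece_self_iff : D.HasPiece z z ↔ z ∈ D.points := by
  simp only [HasPiece, mem_points_iff, true_and]
  refine or_congr_right ⟨?_, ?_⟩ <;> rintro ⟨u, v, huv, h⟩
  · exact ⟨u, v, huv, h.mem.1⟩
  · exact ⟨u, v, huv, .inl ⟨rfl, h⟩⟩

theorem HasPiece.symm (h : D.HasPiece a c) : D.HasPiece c a := by
  rcases h with ⟨rfl, h⟩ | ⟨u, v, huv, h⟩
  · exact .inl ⟨rfl, h⟩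
  · exact .inr ⟨v, u, huv.symm, by rwa [chain_symm, isPiece_reverse]⟩

theorem HasPiece.left_mem_points (h : D.HasPiece a c) : a ∈ D.points := by
  rcases h with ⟨rfl, h⟩ | ⟨u, v, huv, h⟩
  · exact mem_points_iff.2 (.inl h)
  · exact mem_points_iff.2 (.inr ⟨u, v, huv, h.mem.1⟩)

namespace IsPlanar

theorem isSimplePath (h : D.IsPlanar) (huv : G.Adj u v) : IsSimplePath (D.chain u v) :=
  (isSimpleChain_iff.1 (h.2.1 u v huv).1).2

theorem exists_common_vertex (h : D.IsPlanar) (huv : G.Adj u v) (hxy : G.Adj x y)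
    (hne : s(u, v) ≠ s(x, y)) (hz : z ∈ chainTrace (D.chain u v))
    (hz' : z ∈ chainTrace (D.chain x y)) :
    ∃ w, (w = u ∨ w = v) ∧ (w = x ∨ w = y) ∧ D.pos w = z := by
  rw [← curve_eq_chainTrace] at hz hz'
  obtain ⟨w, ⟨hw, hw'⟩, rfl⟩ := h.2.2.2 u v x y huv hxy hne ⟨hz, hz'⟩
  exact ⟨w, hw, hw', rfl⟩

theorem eq_or_eq_of_pos_mem_chainTrace (h : D.IsPlanar) (huv : G.Adj u v)
    (hw : D.pos w ∈ chainTrace (D.chain u v)) : w = u ∨ w = v := by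
  by_contra! hne
  exact h.2.2.1 u v w huv hne.1 hne.2 (by rwa [curve_eq_chainTrace])

theorem pos_mem_ends (h : D.IsPlanar) (huv : G.Adj u v) (hac : IsPiece (D.chain u v) a c)
    (hw : D.pos w ∈ segment ℝ a c) : D.pos w = a ∨ D.pos w = c := by
  have hwmem := D.pos_mem_chain
    (h.eq_or_eq_of_pos_mem_chainTrace huv (hac.segment_subset_chainTrace hw))
  have := (h.isSimplePath huv).eq_or_mem_ends hac (.inl ⟨rfl, hwmem⟩) hw (left_mem_segment ℝ _ _)
  grind

theorem eq_or_mem_ends_of_isPiece (h : D.IsPlanar) (huv : G.Adj u v) (hxy : G.Adj x y) {a' c' : Pt}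
    (hac : IsPiece (D.chain u v) a c) (hac' : IsPiece (D.chain x y) a' c')
    (hz : z ∈ segment ℝ a c) (hz' : z ∈ segment ℝ a' c') :
    s(a, c) = s(a', c') ∨ (z = a ∨ z = c) ∧ (z = a' ∨ z = c') := by
  by_cases he : s(u, v) = s(x, y)
  · rw [Sym2.eq_iff] at he ⊢
    rcases he with ⟨rfl, rfl⟩ | ⟨rfl, rfl⟩
    · exact ((h.isSimplePath huv).eq_or_mem_ends hac hac' hz hz').imp_left .inl
    · rw [chain_symm, isPiece_reverse] at hac'
      rw [segment_symm] at hz'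
      exact ((h.isSimplePath huv).eq_or_mem_ends hac hac' hz hz').imp .inr (.imp_right .symm)
  · obtain ⟨w, -, -, rfl⟩ := h.exists_common_vertex huv hxy he
      (hac.segment_subset_chainTrace hz) (hac'.segment_subset_chainTrace hz')
    exact .inr ⟨h.pos_mem_ends huv hac hz, h.pos_mem_ends hxy hac' hz'⟩

theorem isPlanarSystem [Finite V] (h : D.IsPlanar)
    (hint : ∀ p ∈ D.points, ∃ k : ℤ, p.2 = k) : IsPlanarSystem D.HasPiece where
  symm := HasPiece.symm
  left hac := hasPiece_self_iff.2 hac.left_mem_points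
  finite := D.finite_points.subset fun _ => hasPiece_self_iff.1
  snd_int hp := hint _ (hasPiece_self_iff.1 hp)
  eq_or_mem_ends := by
    rintro a c a' c' z (⟨rfl, w, rfl⟩ | ⟨u, v, huv, hac⟩)
      (⟨rfl, w', rfl⟩ | ⟨x, y, hxy, hac'⟩) hz hz'
    · simp_all
    · obtain rfl : z = D.pos w := by simpa using hz
      exact .inr ⟨by simp, h.pos_mem_ends hxy hac' hz'⟩
    · obtain rfl : z = D.pos w' := by simpa using hz'
      exact .inr ⟨h.pos_mem_ends huv hac hz, by simp⟩
    · exact h.eq_or_mem_ends_of_isPiece huv hxy hac hac' hz hz'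

theorem exists_common_vertex_of_mem_chain (h : D.IsPlanar) (huv : G.Adj u v) (hxy : G.Adj x y)
    (hne : s(u, v) ≠ s(x, y)) (hz : z ∈ D.chain u v) (hz' : z ∈ D.chain x y) :
    ∃ w, (w = u ∨ w = v) ∧ (w = x ∨ w = y) ∧ D.pos w = z :=
  h.exists_common_vertex huv hxy hne (mem_chainTrace_of_mem hz) (mem_chainTrace_of_mem hz')

variable {C : Pt → Pt → Set Pt}

theorem eq_or_eq_of_mem_chainRegion (h : D.IsPlanar) (hC : IsRouting D.HasPiece C)
    (huv : G.Adj u v) (hz : z ∈ chainRegion C (D.chain u v)) (hzw : z ∈ C (D.pos w) (D.pos w)) :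
    w = u ∨ w = v := by
  by_contra hw
  have hmem : D.pos w ∉ D.chain u v := fun hmem =>
    hw (h.eq_or_eq_of_pos_mem_chainTrace huv (mem_chainTrace_of_mem hmem))
  have hpiece : ∀ a c, IsPiece (D.chain u v) a c → D.HasPiece a c := fun a c hac =>
    .inr ⟨u, v, huv, hac⟩
  exact disjoint_left.1 (hC.disjoint_chainRegion hpiece (.inl ⟨rfl, w, rfl⟩) hmem hmem) hzw hz

theorem exists_common_vertex_of_mem_chainRegion (h : D.IsPlanar) (hC : IsRouting D.HasPiece C)
    (huv : G.Adj u v) (hxy : G.Adj x y) (hne : s(u, v) ≠ s(x, y))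
    (hz : z ∈ chainRegion C (D.chain u v)) (hz' : z ∈ chainRegion C (D.chain x y)) :
    ∃ w, (w = u ∨ w = v) ∧ (w = x ∨ w = y) ∧ z ∈ C (D.pos w) (D.pos w) := by
  obtain ⟨a, c, hac, hz⟩ := hz
  obtain ⟨a', c', hac', hz'⟩ := hz'
  suffices ∃ b ∈ D.chain u v, b ∈ D.chain x y ∧ z ∈ C b b by
    obtain ⟨b, hb, hb', hzb⟩ := this
    obtain ⟨w, hw, hw', rfl⟩ := h.exists_common_vertex_of_mem_chain huv hxy hne hb hb'
    exact ⟨w, hw, hw', hzb⟩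
  have hmem := hac.mem
  have hmem' := hac'.mem
  by_cases he : s(a, c) = s(a', c')
  · have hmem' : a ∈ D.chain x y ∧ c ∈ D.chain x y := by
      rcases Sym2.eq_iff.1 he with ⟨rfl, rfl⟩ | ⟨rfl, rfl⟩
      · exact hmem'
      · exact hmem'.symm
    obtain ⟨w, hw, hw', rfl⟩ := h.exists_common_vertex_of_mem_chain huv hxy hne hmem.1 hmem'.1
    obtain ⟨w', hw₁, hw₁', rfl⟩ := h.exists_common_vertex_of_mem_chain huv hxy hne hmem.2 hmem'.2
    obtain rfl : w = w' := by
      rw [Ne, Sym2.eq_iff] at hne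
      grind
    exact ⟨_, hmem.1, hmem'.1, hz⟩
  · obtain ⟨b, hb, hb', hzb⟩ := hC.exists_common_end (.inr ⟨u, v, huv, hac⟩)
      (.inr ⟨x, y, hxy, hac'⟩) he hz hz'
    exact ⟨b, by grind, by grind, hzb⟩

end IsPlanar

end PolylineDrawing

/-! ### Routed drawings -/

/-- The path `m` from `p` to `q` replaces the edge curve `u v` of `D` in the routing `C`. -/
structure IsEdgeRoute {V : Type*} {G : SimpleGraph V} (D : PolylineDrawing G) (C : Pt → Pt → Set Pt)
    (u v : V) (p q : Pt) (m : List Pt) : Prop where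
  path : IsOrthPath p q m
  genuineBends : GenuineBends m
  joins : Joins (C (D.pos u) (D.pos u)) (C (D.pos v) (D.pos v)) (chainRegion C (D.chain u v)) p q
    (chainTrace m)
  visits : ∀ x ∈ D.chain u v, (chainTrace m ∩ C x x).Nonempty
  mono : IsMonoChain (D.chain u v) → IsMonoChain m

/-- `D'` draws every vertex `v` as the box that the routing `C` reserves for it, on the row of `v`
in `D`, and every edge along the region that `C` reserves for its curve in `D`. -/
structure IsRoutedDrawing {V : Type*} {G : SimpleGraph V} (D : PolylineDrawing G)
    (C : Pt → Pt → Set Pt) (D' : OrthDrawing G) : Prop where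
  pts_box : ∀ v, (D'.box v).pts = C (D.pos v) (D.pos v)
  y1_eq : ∀ v, (D'.box v).y1 = (D.pos v).2
  y2_eq : ∀ v, (D'.box v).y2 = (D.pos v).2
  x1_int : ∀ v, ∃ k : ℤ, (D'.box v).x1 = k
  x2_int : ∀ v, ∃ k : ℤ, (D'.box v).x2 = k
  isEdgeRoute : ∀ u v, G.Adj u v → ∃ p q, IsEdgeRoute D C u v p q (D'.chain u v)

section EdgeRoute

variable {V : Type*} {G : SimpleGraph V} {D : PolylineDrawing G} {C : Pt → Pt → Set Pt} {u v w : V}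
  {p q z : Pt} {m : List Pt}

theorem IsEdgeRoute.reverse (h : IsEdgeRoute D C u v p q m) (hC : IsRouting D.HasPiece C) :
    IsEdgeRoute D C v u q p m.reverse where
  path := h.path.reverse
  genuineBends := h.genuineBends.reverse
  joins := by
    rw [D.chain_symm, hC.chainRegion_reverse, chainTrace_reverse]
    exact h.joins.symm
  visits := by simpa only [D.chain_symm u v, List.mem_reverse, chainTrace_reverse] using h.visits
  mono hmono := by
    rw [D.chain_symm] at hmono
    exact (h.mono (by simpa using hmono.reverse)).reverse

theorem IsEdgeRoute.ends_of_mem (h : IsEdgeRoute D C u v p q m) (hw : w = u ∨ w = v)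
    (hz : z ∈ chainTrace m) (hzw : z ∈ C (D.pos w) (D.pos w)) :
    (w = u ∧ m.head? = some z) ∨ (w = v ∧ m.getLast? = some z) := by
  rcases hw with rfl | rfl
  · obtain rfl : z = p := h.joins.inter_start ⟨hz, hzw⟩
    exact .inl ⟨rfl, h.path.head⟩
  · obtain rfl : z = q := h.joins.inter_end ⟨hz, hzw⟩
    exact .inr ⟨rfl, h.path.last⟩

theorem PolylineDrawing.IsPlanar.exists_isEdgeRoute (h : D.IsPlanar) (hC : IsRouting D.HasPiece C)
    (huv : G.Adj u v) : ∃ p q m, IsEdgeRoute D C u v p q m := by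
  obtain ⟨b, l, hl⟩ : ∃ b l, D.chain u v = D.pos u :: b :: l := by
    unfold chain
    cases D.bends u v <;> exact ⟨_, _, rfl⟩
  have hlast : (D.chain u v).getLast? = some (D.pos v) := by
    rw [chain, ← List.cons_append, List.getLast?_concat]
  obtain ⟨p, q, T, hT, ⟨m, hm, rfl, hup, hdown⟩, hvisits⟩ := hC.exists_joins_chain
    (hl ▸ (h.isSimplePath huv).nodup) (fun x y hxy => .inr ⟨u, v, huv, hl ▸ hxy⟩) (hl ▸ hlast)
  obtain ⟨m', hm', htrace, hsub, hbends⟩ := hm.exists_genuineBends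
  rw [← hl, ← htrace] at hT hvisits
  refine ⟨p, q, m', hm', hbends, hT, hvisits, ?_⟩
  rw [isMonoChain_iff, isMonoChain_iff, hl]
  exact Or.imp (fun hmono => (hup hmono).sublist hsub) fun hmono => (hdown hmono).sublist hsub

end EdgeRoute

theorem exists_reversible_choice {V α : Type*} (G : SimpleGraph V) {P : V → V → List α → Prop}
    (hP : ∀ u v l, P u v l → P v u l.reverse) (h : ∀ u v, G.Adj u v → ∃ l, P u v l) :
    ∃ f : V → V → List α, (∀ u v, f v u = (f u v).reverse) ∧
      ∀ u v, G.Adj u v → P u v (f u v) := by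
  classical
  let := linearOrderOfSTO (WellOrderingRel (α := V))
  choose! g hg using h
  refine ⟨fun u v => if u < v then g u v else if v < u then (g v u).reverse else [],
    fun u v => ?_, fun u v huv => ?_⟩
  · rcases lt_trichotomy u v with huv | rfl | huv
    · simp [huv, huv.not_gt]
    · simp
    · simp [huv, huv.not_gt]
  · rcases huv.ne.lt_or_gt with h | h
    · simpa [h] using hg u v huv
    · simpa [h, h.not_gt] using hP v u _ (hg v u huv.symm)

theorem PolylineDrawing.IsPlanar.exists_isRoutedDrawing {V : Type*} {G : SimpleGraph V}
    {D : PolylineDrawing G} {C : Pt → Pt → Set Pt} (h : D.IsPlanar)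
    (hC : IsRouting D.HasPiece C) : ∃ D' : OrthDrawing G, IsRoutedDrawing D C D' := by
  have hbox : ∀ v, ∃ l r : ℤ, l ≤ r ∧ C (D.pos v) (D.pos v) = Icc (l : ℝ) r ×ˢ {(D.pos v).2} :=
    fun v => hC.box (.inl ⟨rfl, v, rfl⟩)
  choose l r hlr hbox using hbox
  obtain ⟨f, hf, hroute⟩ := exists_reversible_choice G
    (P := fun u v m => ∃ p q, IsEdgeRoute D C u v p q m)
    (fun u v m ⟨p, q, hm⟩ => ⟨q, p, hm.reverse hC⟩)
    fun u v huv => by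
      obtain ⟨p, q, m, hm⟩ := h.exists_isEdgeRoute hC huv
      exact ⟨m, p, q, hm⟩
  exact ⟨⟨fun v => ⟨l v, r v, (D.pos v).2, (D.pos v).2, mod_cast hlr v, le_rfl⟩, f, hf⟩,
    fun v => by simp [Box.pts, hbox v], fun _ => rfl, fun _ => rfl, fun v => ⟨l v, rfl⟩,
    fun v => ⟨r v, rfl⟩, hroute⟩

namespace IsRoutedDrawing

variable {V : Type*} {G : SimpleGraph V} {D : PolylineDrawing G} {C : Pt → Pt → Set Pt}
  {D' : OrthDrawing G} {u v w x y : V} {z : Pt}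

theorem left_mem_pts (h : IsRoutedDrawing D C D') (v : V) :
    ((D'.box v).x1, (D.pos v).2) ∈ C (D.pos v) (D.pos v) := by
  rw [← h.pts_box, ← h.y1_eq]
  exact ⟨left_mem_Icc.2 (D'.box v).hx, left_mem_Icc.2 (D'.box v).hy⟩

theorem right_mem_pts (h : IsRoutedDrawing D C D') (v : V) :
    ((D'.box v).x2, (D.pos v).2) ∈ C (D.pos v) (D.pos v) := by
  rw [← h.pts_box, ← h.y1_eq]
  exact ⟨right_mem_Icc.2 (D'.box v).hx, left_mem_Icc.2 (D'.box v).hy⟩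

theorem disjoint_box (h : IsRoutedDrawing D C D') (hD : D.IsPlanar) (hC : IsRouting D.HasPiece C)
    (huv : u ≠ v) : Disjoint (D'.box u).pts (D'.box v).pts := by
  have hne : D.pos u ≠ D.pos v := hD.1.ne huv
  rw [h.pts_box, h.pts_box]
  exact hC.disjoint_box (.inl ⟨rfl, u, rfl⟩) (.inl ⟨rfl, v, rfl⟩) hne hne

theorem exists_chain_eq (h : IsRoutedDrawing D C D') (hD : D.IsPlanar)
    (hC : IsRouting D.HasPiece C) (huv : G.Adj u v) :
    ∃ p q l, D'.chain u v = p :: (l ++ [q]) ∧ p ∈ (D'.box u).pts ∧ q ∈ (D'.box v).pts := by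
  obtain ⟨p, q, hm⟩ := h.isEdgeRoute u v huv
  have hp : p ∈ (D'.box u).pts := h.pts_box u ▸ hm.joins.start_mem
  have hq : q ∈ (D'.box v).pts := h.pts_box v ▸ hm.joins.end_mem
  obtain ⟨l, hl⟩ := hm.path.exists_append_cons
    ((h.disjoint_box hD hC huv.ne).ne_of_mem hp hq)
  exact ⟨p, q, l, hl, hp, hq⟩

theorem two_le_length_chain (h : IsRoutedDrawing D C D') (hD : D.IsPlanar)
    (hC : IsRouting D.HasPiece C) (huv : G.Adj u v) : 2 ≤ (D'.chain u v).length := by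
  obtain ⟨p, q, l, hl, -⟩ := h.exists_chain_eq hD hC huv
  simp [hl]

theorem curve_inter_box_subset (h : IsRoutedDrawing D C D') (hD : D.IsPlanar)
    (hC : IsRouting D.HasPiece C) (huv : G.Adj u v) :
    D'.curve u v ∩ (D'.box w).pts ⊆ {p | (w = u ∧ (D'.chain u v).head? = some p) ∨
      (w = v ∧ (D'.chain u v).getLast? = some p)} := by
  rw [h.pts_box]
  rintro z ⟨hz, hzw⟩
  obtain ⟨p, q, hm⟩ := h.isEdgeRoute u v huv
  replace hz := chainSet_subset_chainTrace _ hz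
  exact hm.ends_of_mem (hD.eq_or_eq_of_mem_chainRegion hC huv (hm.joins.subset hz) hzw) hz hzw

theorem curve_inter_curve_subset (h : IsRoutedDrawing D C D') (hD : D.IsPlanar)
    (hC : IsRouting D.HasPiece C) (huv : G.Adj u v) (hxy : G.Adj x y) (hne : s(u, v) ≠ s(x, y)) :
    D'.curve u v ∩ D'.curve x y ⊆
      {p | ((D'.chain u v).head? = some p ∨ (D'.chain u v).getLast? = some p) ∧
        ((D'.chain x y).head? = some p ∨ (D'.chain x y).getLast? = some p)} := by
  rintro z ⟨hz, hz'⟩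
  obtain ⟨p, q, hm⟩ := h.isEdgeRoute u v huv
  obtain ⟨p', q', hm'⟩ := h.isEdgeRoute x y hxy
  replace hz := chainSet_subset_chainTrace _ hz
  replace hz' := chainSet_subset_chainTrace _ hz'
  obtain ⟨w, hw, hw', hzw⟩ := hD.exists_common_vertex_of_mem_chainRegion hC huv hxy hne
    (hm.joins.subset hz) (hm'.joins.subset hz')
  exact ⟨(hm.ends_of_mem hw hz hzw).imp And.right And.right,
    (hm'.ends_of_mem hw' hz' hzw).imp And.right And.right⟩

theorem isPlanar (h : IsRoutedDrawing D C D') (hD : D.IsPlanar) (hC : IsRouting D.HasPiece C) :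
    D'.IsPlanar := by
  refine ⟨fun _ _ => h.disjoint_box hD hC, fun u v huv => ?_, fun _ _ => h.exists_chain_eq hD hC,
    fun _ _ _ => h.curve_inter_box_subset hD hC,
    fun _ _ _ _ => h.curve_inter_curve_subset hD hC⟩
  obtain ⟨p, q, hm⟩ := h.isEdgeRoute u v huv
  exact ⟨isSimpleChain_iff.2 ⟨h.two_le_length_chain hD hC huv, hm.path.simple⟩,
    isOrthoChain_iff.2 hm.path.axisParallel, hm.genuineBends⟩

theorem isFlat (h : IsRoutedDrawing D C D') : D'.IsFlat := fun v =>
  (h.y1_eq v).trans (h.y2_eq v).symm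

theorem isYMonotone (h : IsRoutedDrawing D C D') (hD : D.IsYMonotone) : D'.IsYMonotone := by
  intro u v huv
  obtain ⟨p, q, hm⟩ := h.isEdgeRoute u v huv
  exact hm.mono (hD u v huv)

theorem x2_lt_x1 (h : IsRoutedDrawing D C D') (hC : IsRouting D.HasPiece C)
    (hrow : (D.pos u).2 = (D.pos v).2) (hlt : (D.pos u).1 < (D.pos v).1) :
    (D'.box u).x2 < (D'.box v).x1 :=
  hC.lt (.inl ⟨rfl, u, rfl⟩) hrow hlt (h.right_mem_pts u) (h.left_mem_pts v)

theorem mem_points_iff (h : IsRoutedDrawing D C D') :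
    z ∈ D'.points ↔
      (∃ v, z ∈ ({((D'.box v).x1, (D.pos v).2), ((D'.box v).x2, (D.pos v).2)} : Set Pt)) ∨
      ∃ u v, G.Adj u v ∧ z ∈ D'.chain u v := by
  simp only [OrthDrawing.points, h.y1_eq, h.y2_eq]
  simp

theorem intCoords (h : IsRoutedDrawing D C D')
    (hint : ∀ p ∈ D.points, ∃ k : ℤ, p.2 = k) : D'.IntCoords := by
  intro z hz
  rcases h.mem_points_iff.1 hz with ⟨v, hz⟩ | ⟨u, v, huv, hz⟩
  · have hy := hint _ (.inl ⟨v, rfl⟩)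
    rcases hz with rfl | rfl
    · exact ⟨h.x1_int v, hy⟩
    · exact ⟨h.x2_int v, hy⟩
  · obtain ⟨p, q, hm⟩ := h.isEdgeRoute u v huv
    exact hm.path.int z hz

theorem forall_mem_points_iff (h : IsRoutedDrawing D C D') (hC : IsRouting D.HasPiece C)
    {lo hi : ℝ} : (∀ z ∈ D.points, z.2 ∈ Icc lo hi) ↔ ∀ z ∈ D'.points, z.2 ∈ Icc lo hi := by
  simp only [PolylineDrawing.mem_points_iff, h.mem_points_iff]
  constructor
  · rintro hD z (⟨v, hz⟩ | ⟨u, v, huv, hz⟩)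
    · have hv := hD _ (.inl ⟨v, rfl⟩)
      rcases hz with rfl | rfl <;> exact hv
    · obtain ⟨p, q, hm⟩ := h.isEdgeRoute u v huv
      obtain ⟨a, c, hac, hz⟩ := hm.joins.subset (mem_chainTrace_of_mem hz)
      exact ordConnected_Icc.uIcc_subset (hD a (.inr ⟨u, v, huv, hac.mem.1⟩))
        (hD c (.inr ⟨u, v, huv, hac.mem.2⟩)) (hC.snd_mem hz)
  · rintro hD' z (⟨v, rfl⟩ | ⟨u, v, huv, hz⟩)
    · exact hD' ((D'.box v).x1, (D.pos v).2) (.inl ⟨v, .inl rfl⟩)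
    · obtain ⟨p, q, hm⟩ := h.isEdgeRoute u v huv
      obtain ⟨z', hz', hzz'⟩ := hm.visits z hz
      have hconv : Convex ℝ (Prod.snd ⁻¹' Icc lo hi : Set Pt) :=
        (convex_Icc lo hi).linear_preimage (LinearMap.snd ℝ ℝ ℝ)
      rw [← hC.snd_eq hzz']
      exact chainTrace_subset_of_convex hconv (fun x hx => hD' x (.inr ⟨u, v, huv, hx⟩)) hz'

theorem inHeight_iff (h : IsRoutedDrawing D C D') (hC : IsRouting D.HasPiece C) {n : ℕ} :
    D.InHeight n ↔ D'.InHeight n :=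
  exists_congr fun _ => h.forall_mem_points_iff hC

end IsRoutedDrawing

theorem polyline_to_flatOrth_general {V : Type*} [Finite V] (G : SimpleGraph V)
    (D : PolylineDrawing G) (hpl : D.IsPlanar) (hint : ∀ p ∈ D.points, ∃ k : ℤ, p.2 = k) :
    ∃ D' : OrthDrawing G, D'.IsPlanar ∧ D'.IsFlat ∧ D'.IntCoords ∧
      (∀ v, (D'.box v).y1 = (D.pos v).2) ∧
      (∀ v w : V, (D.pos v).2 = (D.pos w).2 → (D.pos v).1 < (D.pos w).1 →
        (D'.box v).x2 < (D'.box w).x1) ∧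
      (D.IsYMonotone → D'.IsYMonotone) ∧
      (∀ h : ℕ, D.InHeight h ↔ D'.InHeight h) := by
  obtain ⟨C, hC⟩ := (hpl.isPlanarSystem hint).exists_isRouting
  obtain ⟨D', hD'⟩ := hpl.exists_isRoutedDrawing hC
  exact ⟨D', hD'.isPlanar hpl hC, hD'.isFlat, hD'.intCoords hint, hD'.y1_eq,
    fun _ _ => hD'.x2_lt_x1 hC, hD'.isYMonotone, fun _ => hD'.inHeight_iff hC⟩

/-- Any planar poly-line drawing `D` of a finite simple graph `G` can
be transformed into a planar flat orthogonal drawing `D'` of `G` with the same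
y-coordinates and the same left-to-right order in each row; moreover `D'` is
y-monotone if `D` was, and `D'` has the same height as `D`. -/
theorem polyline_to_flatOrth {V : Type} [Fintype V] (G : SimpleGraph V)
    (D : PolylineDrawing G) (hpl : D.IsPlanar) (hint : D.IntCoords) :
    ∃ D' : OrthDrawing G, D'.IsPlanar ∧ D'.IsFlat ∧ D'.IntCoords ∧
      (∀ v, (D'.box v).y1 = (D.pos v).2) ∧
      (∀ v w : V, (D.pos v).2 = (D.pos w).2 → (D.pos v).1 < (D.pos w).1 →
        (D'.box v).x2 < (D'.box w).x1) ∧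
      (D.IsYMonotone → D'.IsYMonotone) ∧
      (∀ h : ℕ, D.InHeight h ↔ D'.InHeight h) :=
  polyline_to_flatOrth_general G D hpl fun p hp => (hint p hp).2
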